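/- Let k ≥ 2 be a fixed integer and let ε > 0. There is a constant C = C(k, ε) > 0 such that for every real δ > 0 and every integer N ≥ 1, the number of quadruples (n₁, n₂, n₃, n₄) of integers with N < n₁, n₂, n₃, n₄ ≤ 2N and |n₁^{1/k} + n₂^{1/k} − n₃^{1/k} − n₄^{1/k}| < δ N^{1/k} is at most C · N^{ε}(N⁴δ + N²). -/

import Mathlib

open Real

/-- The unimodular exponential `t ↦ exp (i t)`. -/
noncomputable def osc (t : ℝ) : ℂ := Complex.exp (t * Complex.I)

lemma norm_osc (t : ℝ) : ‖osc t‖ = 1 := Complex.norm_exp_ofReal_mul_I t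

lemma osc_add (s t : ℝ) : osc (s + t) = osc s * osc t := by
  simp [osc, add_mul, Complex.exp_add]

lemma conj_osc (t : ℝ) : (starRingEnd ℂ) (osc t) = osc (-t) := by
  simp [osc, ← Complex.exp_conj]

lemma contDiff_osc {n : WithTop ℕ∞} : ContDiff ℝ n osc := by
  unfold osc
  exact (Complex.ofRealCLM.contDiff.mul contDiff_const).cexp

@[fun_prop] lemma continuous_osc : Continuous osc := contDiff_osc (n := 0).continuous

lemma HasDerivAt.osc {f : ℝ → ℝ} {f' x : ℝ} (hf : HasDerivAt f f' x) :
    HasDerivAt (fun y => osc (f y)) (f' * Complex.I * osc (f x)) x := by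
  have h := (hf.ofReal_comp.mul_const Complex.I).cexp
  simpa only [_root_.osc, mul_comm] using h

lemma integral_inv_one_add_mul_sq_le {d : ℝ} (hd : 0 < d) (a b σ : ℝ) :
    ∫ s in a..b, (1 + d * (s - σ) ^ 2)⁻¹ ≤ π / √d := by
  have hs : 0 < √d := Real.sqrt_pos.2 hd
  have h1 : ∀ s : ℝ, (1 + d * (s - σ) ^ 2)⁻¹ = (fun y : ℝ => (1 + y ^ 2)⁻¹) (√d * s - √d * σ) := by
    intro s
    simp only
    rw [← mul_sub, mul_pow, Real.sq_sqrt hd.le]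
  simp_rw [h1]
  rw [intervalIntegral.integral_comp_mul_sub (fun y : ℝ => (1 + y ^ 2)⁻¹) hs.ne',
    integral_inv_one_add_sq, smul_eq_mul, div_eq_inv_mul]
  have := Real.arctan_lt_pi_div_two (√d * b - √d * σ)
  have := Real.neg_pi_div_two_lt_arctan (√d * a - √d * σ)
  gcongr
  linarith

/-- Second derivative test with a stationary point `σ`. -/
lemma norm_integral_mul_osc_le_of_stationary {a b σ c₁ C₂ K l : ℝ} (hab : a ≤ b) (hc₁ : 0 < c₁)
    (hl : 0 < l) {φ φ' G g g' : ℝ → ℝ} (hφ : ∀ s, HasDerivAt φ (φ' s) s) (hφ' : Continuous φ')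
    (hG : ∀ s, HasDerivAt G (g s) s) (hg : ∀ s, HasDerivAt g (g' s) s) (hg' : Continuous g')
    (ha : φ a = 0) (hb : φ b = 0) (hK : ∀ s ∈ Set.Icc a b, |φ s| ≤ K)
    (hK' : ∀ s ∈ Set.Icc a b, |φ' s| ≤ K)
    (hlow : ∀ s ∈ Set.Icc a b, c₁ * (s - σ) ^ 2 ≤ |(s - σ) * g s|)
    (hup : ∀ s ∈ Set.Icc a b, |g s| ≤ C₂ * |s - σ|) (hup' : ∀ s ∈ Set.Icc a b, |g' s| ≤ C₂) :
    ‖∫ s in a..b, (φ s : ℂ) * osc (l * G s)‖ ≤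
      K * ((b - a) / √c₁ + 8 * C₂ * π / (c₁ * √c₁)) / √l := by
  have hK0 : 0 ≤ K := (abs_nonneg _).trans (hK a ⟨le_rfl, hab⟩)
  have hC0 : 0 ≤ C₂ := (abs_nonneg _).trans (hup' a ⟨le_rfl, hab⟩)
  have hcφ : Continuous φ := continuous_iff_continuousAt.2 fun s => (hφ s).continuousAt
  have hcg : Continuous g := continuous_iff_continuousAt.2 fun s => (hg s).continuousAt
  have hcG : Continuous G := continuous_iff_continuousAt.2 fun s => (hG s).continuousAt
  set P : ℝ → ℂ := fun s => 1 + ((l * ((s - σ) * g s) : ℝ) : ℂ) * Complex.I with hP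
  set P' : ℝ → ℂ := fun s => ((l * (g s + (s - σ) * g' s) : ℝ) : ℂ) * Complex.I with hP'
  have hPd : ∀ s, HasDerivAt P (P' s) s := by
    intro s
    have h := ((((hasDerivAt_id s).sub_const σ).mul (hg s)).const_mul l).ofReal_comp.mul_const
      Complex.I
    have h2 := h.const_add (1 : ℂ)
    simpa [hP, hP', id] using h2
  have hnorm : ∀ s, ‖P s‖ ^ 2 = 1 + (l * ((s - σ) * g s)) ^ 2 := by
    intro s
    rw [← Complex.normSq_eq_norm_sq, hP, Complex.normSq_apply]
    simp
    ring
  have hP0 : ∀ s, P s ≠ 0 := by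
    intro s h
    have := hnorm s
    rw [h] at this
    norm_num at this
    nlinarith [sq_nonneg (l * ((s - σ) * g s))]
  set E : ℝ → ℂ := fun s => ((s - σ : ℝ) : ℂ) * osc (l * G s) with hE
  have hEd : ∀ s, HasDerivAt E (P s * osc (l * G s)) s := by
    intro s
    have h := (((hasDerivAt_id s).sub_const σ).ofReal_comp).mul ((hG s).const_mul l).osc
    refine h.congr_deriv ?_
    simp [hP, id]
    ring
  set u : ℝ → ℂ := fun s => (φ s : ℂ) / P s with hu
  set u' : ℝ → ℂ := fun s => ((φ' s : ℂ) * P s - φ s * P' s) / P s ^ 2 with hu'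
  have hud : ∀ s, HasDerivAt u (u' s) s := fun s => ((hφ s).ofReal_comp).div (hPd s) (hP0 s)
  have hPc : Continuous P := continuous_iff_continuousAt.2 fun s => (hPd s).continuousAt
  have hP'c : Continuous P' := by fun_prop
  have hu'c : Continuous u' := by
    apply Continuous.div (by fun_prop) (by fun_prop)
    intro s
    exact pow_ne_zero 2 (hP0 s)
  have key : ∫ s in a..b, (φ s : ℂ) * osc (l * G s) = - ∫ s in a..b, u' s * E s := by
    have h := intervalIntegral.integral_mul_deriv_eq_deriv_mul (a := a) (b := b)
      (u := u) (v := E) (u' := u') (v' := fun s => P s * osc (l * G s)) (fun s _ => hud s)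
      (fun s _ => hEd s) (hu'c.intervalIntegrable _ _)
      (Continuous.intervalIntegrable (by fun_prop) _ _)
    rw [show u b = 0 by simp [hu, hb], show u a = 0 by simp [hu, ha], zero_mul, zero_mul, sub_zero,
      zero_sub] at h
    rw [← h]
    refine intervalIntegral.integral_congr fun s _ => ?_
    simp only [hu]
    field_simp [hP0 s]
  rw [key, norm_neg]
  have hd : 0 < l * c₁ := mul_pos hl hc₁
  have hsd : 0 < √(l * c₁) := Real.sqrt_pos.2 hd
  have hbound : ∀ s ∈ Set.Icc a b, ‖u' s * E s‖ ≤
      K / √(l * c₁) + 8 * K * C₂ / c₁ * (1 + l * c₁ * (s - σ) ^ 2)⁻¹ := by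
    intro s hs
    set y := s - σ with hy
    have hQ : 0 < 1 + l * c₁ * y ^ 2 := by positivity
    have hPl : (1 + l * c₁ * y ^ 2) / 2 ≤ ‖P s‖ := by
      have h1 : 1 ≤ ‖P s‖ := by
        have := hnorm s
        nlinarith [sq_nonneg (l * (y * g s)), norm_nonneg (P s)]
      have h2 : l * c₁ * y ^ 2 ≤ ‖P s‖ := by
        have h3 : l * c₁ * y ^ 2 ≤ |l * (y * g s)| := by
          rw [abs_mul, abs_of_pos hl, mul_assoc]
          exact mul_le_mul_of_nonneg_left (hlow s hs) hl.le
        refine h3.trans (abs_le_of_sq_le_sq ?_ (norm_nonneg (P s)))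
        rw [hnorm s]; linarith
      linarith
    have hPpos : 0 < ‖P s‖ := by linarith [hPl, half_pos hQ]
    have hP'u : ‖P' s‖ ≤ 2 * l * C₂ * |y| := by
      simp only [hP', norm_mul, Complex.norm_I, mul_one, Complex.norm_real, Real.norm_eq_abs]
      rw [abs_of_pos hl]
      have h1 : |g s + y * g' s| ≤ C₂ * |y| + |y| * C₂ := by
        refine (abs_add_le _ _).trans (add_le_add (hup s hs) ?_)
        rw [abs_mul]
        exact mul_le_mul_of_nonneg_left (hup' s hs) (abs_nonneg _)
      calc l * |g s + y * g' s| ≤ l * (C₂ * |y| + |y| * C₂) := by gcongr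
        _ = _ := by ring
    have e1 : ‖u' s * E s‖ ≤ (K * ‖P s‖ + K * (2 * l * C₂ * |y|)) / ‖P s‖ ^ 2 * |y| := by
      simp only [hu', hE, norm_mul, norm_div, norm_pow, norm_osc, mul_one, Complex.norm_real,
        Real.norm_eq_abs]
      gcongr
      refine (norm_sub_le _ _).trans ?_
      rw [norm_mul, norm_mul, Complex.norm_real, Complex.norm_real, Real.norm_eq_abs,
        Real.norm_eq_abs]
      gcongr
      · exact hK' s hs
      · exact hK s hs
    refine e1.trans ?_
    have e2 : (K * ‖P s‖ + K * (2 * l * C₂ * |y|)) / ‖P s‖ ^ 2 * |y| =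
        K * |y| / ‖P s‖ + K * 2 * l * C₂ * y ^ 2 / ‖P s‖ ^ 2 := by
      rw [← sq_abs y]
      field_simp
    rw [e2]
    apply add_le_add
    · rw [div_le_div_iff₀ hPpos hsd, mul_assoc]
      refine mul_le_mul_of_nonneg_left ?_ hK0
      have h5 : (√(l * c₁) * |y|) ^ 2 = l * c₁ * y ^ 2 := by
        rw [mul_pow, Real.sq_sqrt hd.le, sq_abs]
      nlinarith [sq_nonneg (√(l * c₁) * |y| - 1)]
    · have h6 : ((1 + l * c₁ * y ^ 2) / 2) ^ 2 ≤ ‖P s‖ ^ 2 := by gcongr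
      calc K * 2 * l * C₂ * y ^ 2 / ‖P s‖ ^ 2
          ≤ K * 2 * l * C₂ * y ^ 2 / ((1 + l * c₁ * y ^ 2) / 2) ^ 2 := by gcongr
        _ = (8 * K * C₂ / c₁ * (1 + l * c₁ * y ^ 2)⁻¹) *
            (l * c₁ * y ^ 2 / (1 + l * c₁ * y ^ 2)) := by field_simp; ring
        _ ≤ (8 * K * C₂ / c₁ * (1 + l * c₁ * y ^ 2)⁻¹) * 1 := by
            gcongr
            rw [div_le_one hQ]; linarith
        _ = _ := mul_one _
  have hcont : Continuous fun s : ℝ => (1 + l * c₁ * (s - σ) ^ 2)⁻¹ := by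
    apply Continuous.inv₀ (by fun_prop)
    intro s
    positivity
  calc ‖∫ s in a..b, u' s * E s‖
      ≤ ∫ s in a..b, (K / √(l * c₁) + 8 * K * C₂ / c₁ * (1 + l * c₁ * (s - σ) ^ 2)⁻¹) := by
        apply intervalIntegral.norm_integral_le_of_norm_le hab
        · exact Filter.Eventually.of_forall fun s hs => hbound s ⟨hs.1.le, hs.2⟩
        · exact Continuous.intervalIntegrable (by fun_prop) _ _
    _ = (b - a) * (K / √(l * c₁)) + 8 * K * C₂ / c₁ *
        ∫ s in a..b, (1 + l * c₁ * (s - σ) ^ 2)⁻¹ := by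
        rw [intervalIntegral.integral_add (Continuous.intervalIntegrable (by fun_prop) _ _)
          (Continuous.intervalIntegrable (by fun_prop) _ _)]
        simp [mul_div_assoc]
    _ ≤ (b - a) * (K / √(l * c₁)) + 8 * K * C₂ / c₁ * (π / √(l * c₁)) := by
        gcongr
        exact integral_inv_one_add_mul_sq_le hd _ _ _
    _ = _ := by
        rw [Real.sqrt_mul hl.le]
        have := (Real.sqrt_pos.2 hl).ne'
        have := (Real.sqrt_pos.2 hc₁).ne'
        field_simp

lemma AnalyticOnNhd.dslope_univ {f : ℝ → ℝ} (hf : AnalyticOnNhd ℝ f Set.univ) (x₀ : ℝ) :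
    AnalyticOnNhd ℝ (dslope f x₀) Set.univ := by
  intro x _
  rcases eq_or_ne x x₀ with rfl | hx
  · obtain ⟨p, hp⟩ := hf x trivial
    exact ⟨_, hp.has_fpower_series_dslope_fslope⟩
  · refine AnalyticAt.congr ?_ (dslope_eventuallyEq_slope_of_ne f hx).symm
    have h1 : AnalyticAt ℝ (fun y => (y - x₀)⁻¹ * (f y - f x₀)) x :=
      ((analyticAt_id.sub analyticAt_const).inv (sub_ne_zero.2 hx)).mul
        ((hf x trivial).sub analyticAt_const)
    exact h1

/-- The model phase `exp (α s) - α exp s`, normalised to vanish at its critical point `0`. -/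
noncomputable def modelPhase (α s : ℝ) : ℝ := exp (α * s) - α * exp s - (1 - α)

noncomputable def modelPhaseDeriv (α s : ℝ) : ℝ := α * (exp (α * s) - exp s)

noncomputable def modelPhaseDeriv₂ (α s : ℝ) : ℝ := α * (α * exp (α * s) - exp s)

lemma hasDerivAt_modelPhase (α s : ℝ) :
    HasDerivAt (modelPhase α) (modelPhaseDeriv α s) s := by
  have h := (((((hasDerivAt_id s).const_mul α).exp).sub ((hasDerivAt_exp s).const_mul α)).sub_const
    (1 - α))
  refine h.congr_deriv ?_
  simp [modelPhaseDeriv]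
  ring

lemma hasDerivAt_modelPhaseDeriv (α s : ℝ) :
    HasDerivAt (modelPhaseDeriv α) (modelPhaseDeriv₂ α s) s := by
  have h := ((((hasDerivAt_id s).const_mul α).exp).sub (hasDerivAt_exp s)).const_mul α
  refine h.congr_deriv ?_
  simp only [modelPhaseDeriv₂, id]
  ring

lemma analyticOnNhd_modelPhase (α : ℝ) : AnalyticOnNhd ℝ (modelPhase α) Set.univ := by
  intro x _
  have : AnalyticAt ℝ (fun s => exp (α * s) - α * exp s - (1 - α)) x := by fun_prop
  exact this

lemma analyticOnNhd_modelPhaseDeriv (α : ℝ) : AnalyticOnNhd ℝ (modelPhaseDeriv α) Set.univ := by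
  intro x _
  have : AnalyticAt ℝ (fun s => α * (exp (α * s) - exp s)) x := by fun_prop
  exact this

@[fun_prop] lemma continuous_modelPhase (α : ℝ) : Continuous (modelPhase α) := by
  unfold modelPhase; fun_prop

@[fun_prop] lemma continuous_modelPhaseDeriv (α : ℝ) : Continuous (modelPhaseDeriv α) := by
  unfold modelPhaseDeriv; fun_prop

lemma continuous_modelPhaseDeriv₂ (α : ℝ) : Continuous (modelPhaseDeriv₂ α) := by
  unfold modelPhaseDeriv₂; fun_prop

/-- `modelPhaseDeriv α s = s * slope`, with the slope function nowhere zero. -/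
lemma exists_modelPhaseDeriv_eq_mul {α : ℝ} (hα0 : α ≠ 0) (hα1 : α ≠ 1) :
    ∃ k : ℝ → ℝ, AnalyticOnNhd ℝ k Set.univ ∧ (∀ s, k s ≠ 0) ∧
      ∀ s, modelPhaseDeriv α s = s * k s := by
  have hz : modelPhaseDeriv α 0 = 0 := by simp [modelPhaseDeriv]
  have heq : ∀ s, modelPhaseDeriv α s = s * dslope (modelPhaseDeriv α) 0 s := by
    intro s
    have := sub_smul_dslope (modelPhaseDeriv α) 0 s
    simpa [hz] using this.symm
  refine ⟨dslope (modelPhaseDeriv α) 0, (analyticOnNhd_modelPhaseDeriv α).dslope_univ 0, ?_, heq⟩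
  intro s hs
  rcases eq_or_ne s 0 with rfl | h0
  · rw [dslope_same, (hasDerivAt_modelPhaseDeriv α 0).deriv] at hs
    simp [modelPhaseDeriv₂, hα0, sub_eq_zero, hα1] at hs
  · have h1 := heq s
    rw [hs, mul_zero, modelPhaseDeriv, mul_eq_zero, or_iff_right hα0, sub_eq_zero, exp_eq_exp] at h1
    exact hα1 (mul_right_cancel₀ h0 (h1.trans (one_mul s).symm))

lemma exists_modelPhase_eq_mul_deriv {α : ℝ} (hα0 : α ≠ 0) (hα1 : α ≠ 1) :
    ∃ q : ℝ → ℝ, ContDiff ℝ 2 q ∧ ∀ s, modelPhase α s = q s * modelPhaseDeriv α s := by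
  obtain ⟨k, hk, hk0, hkeq⟩ := exists_modelPhaseDeriv_eq_mul hα0 hα1
  set f₁ := dslope (modelPhase α) 0 with hf₁
  set f₂ := dslope f₁ 0 with hf₂
  have hz : modelPhase α 0 = 0 := by simp [modelPhase]
  have h1 : ∀ s, modelPhase α s = s * f₁ s := by
    intro s
    have := sub_smul_dslope (modelPhase α) 0 s
    simpa [hz] using this.symm
  have hf10 : f₁ 0 = 0 := by
    rw [hf₁, dslope_same, (hasDerivAt_modelPhase α 0).deriv]
    simp [modelPhaseDeriv]
  have h2 : ∀ s, f₁ s = s * f₂ s := by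
    intro s
    have := sub_smul_dslope f₁ 0 s
    simpa [hf10] using this.symm
  have ha₂ : AnalyticOnNhd ℝ f₂ Set.univ :=
    ((analyticOnNhd_modelPhase α).dslope_univ 0).dslope_univ 0
  refine ⟨fun s => s * f₂ s / k s, ?_, ?_⟩
  · rw [contDiff_iff_contDiffAt]
    intro s
    exact ((analyticAt_id.mul (ha₂ s trivial)).div (hk s trivial) (hk0 s)).contDiffAt
  · intro s
    rw [h1, h2, hkeq]
    field_simp [hk0 s]

lemma exists_modelPhase_bounds {α : ℝ} (hα0 : α ≠ 0) (hα1 : α ≠ 1) (R : ℝ) :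
    ∃ c₁ C₂ : ℝ, 0 < c₁ ∧ 0 ≤ C₂ ∧ ∀ s, |s| ≤ R → c₁ * s ^ 2 ≤ |s * modelPhaseDeriv α s| ∧
      |modelPhaseDeriv α s| ≤ C₂ * |s| ∧ |modelPhaseDeriv₂ α s| ≤ C₂ := by
  obtain ⟨k, hk, hk0, hkeq⟩ := exists_modelPhaseDeriv_eq_mul hα0 hα1
  have hkc : Continuous k := continuous_iff_continuousAt.2 fun s => (hk s trivial).continuousAt
  obtain ⟨A, hA⟩ := (isCompact_Icc (a := -R) (b := R)).exists_bound_of_continuousOn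
    (f := fun s => (k s)⁻¹) (hkc.inv₀ hk0).continuousOn
  obtain ⟨B, hB⟩ := (isCompact_Icc (a := -R) (b := R)).exists_bound_of_continuousOn hkc.continuousOn
  obtain ⟨D, hD⟩ := (isCompact_Icc (a := -R) (b := R)).exists_bound_of_continuousOn
    (continuous_modelPhaseDeriv₂ α).continuousOn
  refine ⟨(|A| + 1)⁻¹, |B| + |D|, by positivity, by positivity, fun s hs => ?_⟩
  have hs' : s ∈ Set.Icc (-R) R := abs_le.1 hs
  have hkpos : 0 < |k s| := abs_pos.2 (hk0 s)
  refine ⟨?_, ?_, ?_⟩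
  · rw [hkeq, ← mul_assoc, abs_mul, ← sq, abs_of_nonneg (sq_nonneg s), mul_comm]
    gcongr
    have h1 := hA s hs'
    rw [norm_inv, Real.norm_eq_abs] at h1
    rw [inv_le_comm₀ (by positivity) hkpos]
    linarith [le_abs_self A]
  · rw [hkeq, abs_mul, mul_comm]
    gcongr
    have h1 := hB s hs'
    rw [Real.norm_eq_abs] at h1
    linarith [le_abs_self B, abs_nonneg D]
  · have h1 := hD s hs'
    rw [Real.norm_eq_abs] at h1
    linarith [le_abs_self D, abs_nonneg B]

/-- Uniform second derivative test for a smooth family of amplitudes against the translated model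
phase. -/
lemma exists_stationary_bound {α : ℝ} (hα0 : α ≠ 0) (hα1 : α ≠ 1) {s₀ s₁ t₀ t₁ : ℝ} (hs : s₀ ≤ s₁)
    {F : ℝ × ℝ × ℝ → ℝ} (hF : ContDiff ℝ 1 F)
    (h₀ : ∀ z ∈ Set.Icc (1 : ℝ) 2, ∀ σ, F (z, σ, s₀) = 0)
    (h₁ : ∀ z ∈ Set.Icc (1 : ℝ) 2, ∀ σ, F (z, σ, s₁) = 0) :
    ∃ C : ℝ, ∀ z ∈ Set.Icc (1 : ℝ) 2, ∀ σ ∈ Set.Icc t₀ t₁, ∀ l : ℝ, 0 < l →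
      ‖∫ s in s₀..s₁, (F (z, σ, s) : ℂ) * osc (l * modelPhase α (s - σ))‖ ≤ C / √l := by
  set R := |s₀| + |s₁| + |t₀| + |t₁| with hR
  obtain ⟨c₁, C₂, hc₁, hC₂, hb⟩ := exists_modelPhase_bounds hα0 hα1 R
  set F' : ℝ × ℝ × ℝ → ℝ := fun p => fderiv ℝ F p (0, 0, 1) with hF'
  have hF'c : Continuous F' := (hF.continuous_fderiv one_ne_zero).clm_apply continuous_const
  have hFd : ∀ z σ s, HasDerivAt (fun s => F (z, σ, s)) (F' (z, σ, s)) s := by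
    intro z σ s
    have h := (hF.differentiable one_ne_zero (z, σ, s)).hasFDerivAt
    have h2 : HasDerivAt (fun s : ℝ => (z, σ, s)) ((0 : ℝ), (0 : ℝ), (1 : ℝ)) s :=
      (hasDerivAt_const s z).prodMk ((hasDerivAt_const s σ).prodMk (hasDerivAt_id s))
    exact h.comp_hasDerivAt s h2
  have hcomp : IsCompact (Set.Icc (1 : ℝ) 2 ×ˢ Set.Icc t₀ t₁ ×ˢ Set.Icc s₀ s₁) :=
    isCompact_Icc.prod (isCompact_Icc.prod isCompact_Icc)
  obtain ⟨K₁, hK₁⟩ := hcomp.exists_bound_of_continuousOn hF.continuous.continuousOn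
  obtain ⟨K₂, hK₂⟩ := hcomp.exists_bound_of_continuousOn hF'c.continuousOn
  refine ⟨max K₁ K₂ * ((s₁ - s₀) / √c₁ + 8 * C₂ * π / (c₁ * √c₁)), fun z hz σ hσ l hl => ?_⟩
  have hbd : ∀ s ∈ Set.Icc s₀ s₁, |s - σ| ≤ R := by
    intro s hs'
    rw [abs_le]
    obtain ⟨a1, a2⟩ := hs'
    obtain ⟨b1, b2⟩ := hσ
    constructor <;> rw [hR] <;>
    linarith [neg_abs_le s₀, le_abs_self s₁, neg_abs_le t₀, le_abs_self t₁, abs_nonneg s₁,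
      abs_nonneg t₀, abs_nonneg s₀, abs_nonneg t₁]
  refine norm_integral_mul_osc_le_of_stationary (σ := σ) hs hc₁ hl (φ := fun s => F (z, σ, s))
    (φ' := fun s => F' (z, σ, s)) (G := fun s => modelPhase α (s - σ))
    (g := fun s => modelPhaseDeriv α (s - σ)) (g' := fun s => modelPhaseDeriv₂ α (s - σ))
    (hFd z σ) (by fun_prop) (fun s => (hasDerivAt_modelPhase α (s - σ)).comp_sub_const s σ)
    (fun s => (hasDerivAt_modelPhaseDeriv α (s - σ)).comp_sub_const s σ)
    ((continuous_modelPhaseDeriv₂ α).comp (by fun_prop)) (h₀ z hz σ) (h₁ z hz σ) ?_ ?_ ?_ ?_ ?_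
  · exact fun s hs' => (hK₁ (z, σ, s) ⟨hz, hσ, hs'⟩).trans (le_max_left _ _)
  · exact fun s hs' => (hK₂ (z, σ, s) ⟨hz, hσ, hs'⟩).trans (le_max_right _ _)
  · exact fun s hs' => (hb _ (hbd s hs')).1
  · exact fun s hs' => (hb _ (hbd s hs')).2.1
  · exact fun s hs' => (hb _ (hbd s hs')).2.2

lemma hasDerivAt_intervalIntegral_of_continuous {F F' : ℝ → ℝ → ℂ} {a b : ℝ}
    (hF : Continuous (Function.uncurry F)) (hF' : Continuous (Function.uncurry F'))
    (hd : ∀ z s, HasDerivAt (fun z => F z s) (F' z s) z) (z : ℝ) :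
    HasDerivAt (fun z => ∫ s in a..b, F z s) (∫ s in a..b, F' z s) z := by
  obtain ⟨K, hK⟩ := ((isCompact_Icc (a := z - 1) (b := z + 1)).prod
    (isCompact_uIcc (a := a) (b := b))).exists_bound_of_continuousOn hF'.continuousOn
  refine (intervalIntegral.hasDerivAt_integral_of_dominated_loc_of_deriv_le (F := F) (F' := F')
    (bound := fun _ => K) (s := Set.Icc (z - 1) (z + 1))
    (Icc_mem_nhds (by linarith) (by linarith)) ?_ ?_ ?_ ?_ ?_ ?_).2
  · exact Filter.Eventually.of_forall fun y =>
      (Continuous.aestronglyMeasurable (by fun_prop))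
  · exact Continuous.intervalIntegrable (by fun_prop) _ _
  · exact Continuous.aestronglyMeasurable (by fun_prop)
  · refine Filter.Eventually.of_forall fun s hs y hy => hK (y, s) ⟨hy, Set.uIoc_subset_uIcc hs⟩
  · simp
  · exact Filter.Eventually.of_forall fun s _ y _ => hd y s

/-- The oscillatory integral attached to the frequency with critical point `σ`, after removal of
the value of the phase at `σ`. -/
noncomputable def statAmp (ω : ℝ → ℝ) (α s₀ s₁ Y σ z : ℝ) : ℂ :=
  ∫ s in s₀..s₁, ((ω (z * exp s) * exp s : ℝ) : ℂ) *
    osc (Y * z * exp (α * σ) * modelPhase α (s - σ))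

noncomputable def statAmpDeriv (ω : ℝ → ℝ) (α s₀ s₁ Y σ z : ℝ) : ℂ :=
  ∫ s in s₀..s₁, (((deriv ω (z * exp s) * exp s * exp s : ℝ) : ℂ) +
      ((ω (z * exp s) * exp s : ℝ) : ℂ) *
        ((Y * exp (α * σ) * modelPhase α (s - σ) : ℝ) * Complex.I)) *
    osc (Y * z * exp (α * σ) * modelPhase α (s - σ))

lemma hasDerivAt_statAmp {ω : ℝ → ℝ} (hω : ContDiff ℝ 3 ω) (α s₀ s₁ Y σ z : ℝ) :
    HasDerivAt (statAmp ω α s₀ s₁ Y σ) (statAmpDeriv ω α s₀ s₁ Y σ z) z := by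
  have hω' : Continuous (deriv ω) := hω.continuous_deriv (by norm_num)
  have hωc : Continuous ω := hω.continuous
  refine hasDerivAt_intervalIntegral_of_continuous
    (F := fun z s => ((ω (z * exp s) * exp s : ℝ) : ℂ) *
      osc (Y * z * exp (α * σ) * modelPhase α (s - σ)))
    (F' := fun z s => (((deriv ω (z * exp s) * exp s * exp s : ℝ) : ℂ) +
      ((ω (z * exp s) * exp s : ℝ) : ℂ) *
        ((Y * exp (α * σ) * modelPhase α (s - σ) : ℝ) * Complex.I)) *
    osc (Y * z * exp (α * σ) * modelPhase α (s - σ))) ?_ ?_ ?_ z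
  · unfold Function.uncurry
    fun_prop
  · unfold Function.uncurry
    fun_prop
  · intro z s
    have h1 : HasDerivAt (fun z => ω (z * exp s) * exp s)
        (deriv ω (z * exp s) * exp s * exp s) z := by
      have h := ((hω.differentiable (by norm_num) (z * exp s)).hasDerivAt.comp z
        ((hasDerivAt_id z).mul_const (exp s))).mul_const (exp s)
      simpa using h
    have h2 : HasDerivAt (fun z => Y * z * exp (α * σ) * modelPhase α (s - σ))
        (Y * exp (α * σ) * modelPhase α (s - σ)) z := by
      have h := ((((hasDerivAt_id z).const_mul Y).mul_const (exp (α * σ))).mul_const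
        (modelPhase α (s - σ)))
      simpa using h
    refine (h1.ofReal_comp.mul h2.osc).congr_deriv ?_
    push_cast
    ring

lemma continuous_statAmpDeriv {ω : ℝ → ℝ} (hω : ContDiff ℝ 3 ω) (α s₀ s₁ Y σ : ℝ) :
    Continuous (statAmpDeriv ω α s₀ s₁ Y σ) := by
  have hω' : Continuous (deriv ω) := hω.continuous_deriv (by norm_num)
  have hωc : Continuous ω := hω.continuous
  refine intervalIntegral.continuous_parametric_intervalIntegral_of_continuous' ?_ _ _
  unfold Function.uncurry
  fun_prop

lemma statAmp_eq_add_integral {ω : ℝ → ℝ} (hω : ContDiff ℝ 3 ω) (α s₀ s₁ Y σ z : ℝ) :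
    statAmp ω α s₀ s₁ Y σ z =
      statAmp ω α s₀ s₁ Y σ 1 + ∫ ζ in (1 : ℝ)..z, statAmpDeriv ω α s₀ s₁ Y σ ζ := by
  rw [intervalIntegral.integral_eq_sub_of_hasDerivAt
    (fun x _ => hasDerivAt_statAmp hω α s₀ s₁ Y σ x)
    ((continuous_statAmpDeriv hω α s₀ s₁ Y σ).intervalIntegrable _ _)]
  ring

/-- Multiplying the amplitude by the phase and integrating by parts. -/
lemma integral_mul_phase_mul_osc {f f' q q' : ℝ → ℝ} {α s₀ s₁ σ l : ℝ}
    (hf : ∀ s, HasDerivAt f (f' s) s) (hf' : Continuous f')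
    (hq : ∀ s, HasDerivAt q (q' s) s) (hq' : Continuous q')
    (hqH : ∀ s, modelPhase α s = q s * modelPhaseDeriv α s) (h₀ : f s₀ = 0) (h₁ : f s₁ = 0) :
    ∫ s in s₀..s₁, (f s : ℂ) * ((l * modelPhase α (s - σ) : ℝ) * Complex.I) *
        osc (l * modelPhase α (s - σ)) =
      - ∫ s in s₀..s₁, ((f' s * q (s - σ) + f s * q' (s - σ) : ℝ) : ℂ) *
        osc (l * modelPhase α (s - σ)) := by
  have hcf : Continuous f := continuous_iff_continuousAt.2 fun s => (hf s).continuousAt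
  have hcq : Continuous q := continuous_iff_continuousAt.2 fun s => (hq s).continuousAt
  have h := intervalIntegral.integral_mul_deriv_eq_deriv_mul (a := s₀) (b := s₁)
    (u := fun s => ((f s * q (s - σ) : ℝ) : ℂ)) (v := fun s => osc (l * modelPhase α (s - σ)))
    (u' := fun s => ((f' s * q (s - σ) + f s * q' (s - σ) : ℝ) : ℂ))
    (v' := fun s => ((l * modelPhaseDeriv α (s - σ) : ℝ) : ℂ) * Complex.I *
      osc (l * modelPhase α (s - σ)))
    (fun s _ => ((hf s).mul ((hq (s - σ)).comp_sub_const s σ)).ofReal_comp)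
    (fun s _ => (((hasDerivAt_modelPhase α (s - σ)).comp_sub_const s σ).const_mul l).osc)
    (Continuous.intervalIntegrable (by fun_prop) _ _)
    (Continuous.intervalIntegrable (by fun_prop) _ _)
  simp only [h₀, h₁, zero_mul, Complex.ofReal_zero, sub_zero, zero_sub] at h
  rw [← h]
  refine intervalIntegral.integral_congr fun s _ => ?_
  rw [hqH]
  push_cast
  ring

lemma exists_statAmp_bound {α : ℝ} (hα0 : α ≠ 0) (hα1 : α ≠ 1) {ω : ℝ → ℝ} (hω : ContDiff ℝ 3 ω)
    {s₀ s₁ : ℝ} (hs : s₀ ≤ s₁)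
    (h₀ : ∀ z ∈ Set.Icc (1 : ℝ) 2, ω =ᶠ[nhds (z * exp s₀)] 0)
    (h₁ : ∀ z ∈ Set.Icc (1 : ℝ) 2, ω =ᶠ[nhds (z * exp s₁)] 0) (t₀ t₁ : ℝ) :
    ∃ C : ℝ, ∀ Y, 0 < Y → ∀ σ ∈ Set.Icc t₀ t₁, ∀ z ∈ Set.Icc (1 : ℝ) 2,
      ‖statAmp ω α s₀ s₁ Y σ z‖ ≤ C / √Y ∧ ‖statAmpDeriv ω α s₀ s₁ Y σ z‖ ≤ C / √Y := by
  obtain ⟨q, hq, hqH⟩ := exists_modelPhase_eq_mul_deriv hα0 hα1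
  have hω1 : ContDiff ℝ 2 (deriv ω) := hω.deriv' (n := 2)
  have hq1 : ContDiff ℝ 1 (deriv q) := hq.deriv' (n := 1)
  have hω01 : ContDiff ℝ 1 ω := hω.of_le (by norm_num)
  have hω11 : ContDiff ℝ 1 (deriv ω) := hω1.of_le (by norm_num)
  have hq01 : ContDiff ℝ 1 q := hq.of_le (by norm_num)
  have hωd : ∀ z s : ℝ, HasDerivAt (fun s => ω (z * exp s) * exp s)
      (deriv ω (z * exp s) * (z * exp s) * exp s + ω (z * exp s) * exp s) s := by
    intro z s
    exact ((hω.differentiable (by norm_num) (z * exp s)).hasDerivAt.comp s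
      ((hasDerivAt_exp s).const_mul z)).mul (hasDerivAt_exp s)
  have v₀ : ∀ z ∈ Set.Icc (1 : ℝ) 2, ω (z * exp s₀) = 0 ∧ deriv ω (z * exp s₀) = 0 := by
    intro z hz
    exact ⟨(h₀ z hz).eq_of_nhds, by rw [(h₀ z hz).deriv_eq]; simp⟩
  have v₁ : ∀ z ∈ Set.Icc (1 : ℝ) 2, ω (z * exp s₁) = 0 ∧ deriv ω (z * exp s₁) = 0 := by
    intro z hz
    exact ⟨(h₁ z hz).eq_of_nhds, by rw [(h₁ z hz).deriv_eq]; simp⟩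
  obtain ⟨C₁, hC₁⟩ := exists_stationary_bound hα0 hα1 (t₀ := t₀) (t₁ := t₁) hs
    (F := fun p => ω (p.1 * exp p.2.2) * exp p.2.2) (by fun_prop)
    (fun z hz σ => by simp [v₀ z hz]) (fun z hz σ => by simp [v₁ z hz])
  obtain ⟨C₂, hC₂⟩ := exists_stationary_bound hα0 hα1 (t₀ := t₀) (t₁ := t₁) hs
    (F := fun p => deriv ω (p.1 * exp p.2.2) * exp p.2.2 * exp p.2.2) (by fun_prop)
    (fun z hz σ => by simp [v₀ z hz]) (fun z hz σ => by simp [v₁ z hz])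
  obtain ⟨C₃, hC₃⟩ := exists_stationary_bound hα0 hα1 (t₀ := t₀) (t₁ := t₁) hs
    (F := fun p => (deriv ω (p.1 * exp p.2.2) * (p.1 * exp p.2.2) * exp p.2.2 +
      ω (p.1 * exp p.2.2) * exp p.2.2) * q (p.2.2 - p.2.1) +
      ω (p.1 * exp p.2.2) * exp p.2.2 * deriv q (p.2.2 - p.2.1)) (by fun_prop)
    (fun z hz σ => by simp [v₀ z hz]) (fun z hz σ => by simp [v₁ z hz])
  obtain ⟨D, hD⟩ := (isCompact_Icc (a := t₀) (b := t₁)).exists_bound_of_continuousOn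
    (f := fun σ => (√(exp (α * σ)))⁻¹) (Continuous.continuousOn (Continuous.inv₀ (by fun_prop)
      fun σ => (Real.sqrt_pos.2 (exp_pos _)).ne'))
  refine ⟨(|C₁| + |C₂| + |C₃|) * |D|, fun Y hY σ hσ z hz => ?_⟩
  have hz0 : 0 < z := lt_of_lt_of_le one_pos hz.1
  set l := Y * z * exp (α * σ) with hl
  have hlpos : 0 < l := by positivity
  have hsl : ∀ C : ℝ, C / √l ≤ |C| * |D| / √Y := by
    intro C
    have h1 : (√l)⁻¹ ≤ |D| / √Y := by
      rw [hl, Real.sqrt_mul (by positivity), Real.sqrt_mul hY.le, mul_inv, mul_inv]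
      have h2 : (√z)⁻¹ ≤ 1 := inv_le_one_of_one_le₀ (Real.one_le_sqrt.2 hz.1)
      have h3 : (√(exp (α * σ)))⁻¹ ≤ |D| := by
        have := hD σ hσ
        rw [Real.norm_of_nonneg (by positivity)] at this
        exact this.trans (le_abs_self D)
      calc (√Y)⁻¹ * (√z)⁻¹ * (√(exp (α * σ)))⁻¹ ≤ (√Y)⁻¹ * 1 * |D| := by gcongr
        _ = _ := by ring
    calc C / √l ≤ |C| * (√l)⁻¹ := by
          rw [div_eq_mul_inv]; gcongr; exact le_abs_self C
      _ ≤ |C| * (|D| / √Y) := by gcongr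
      _ = _ := by ring
  have e1 := (hC₁ z hz σ hσ l hlpos).trans (hsl C₁)
  have e2 := (hC₂ z hz σ hσ l hlpos).trans (hsl C₂)
  have e3 := (hC₃ z hz σ hσ l hlpos).trans (hsl C₃)
  have hωc : Continuous ω := hω.continuous
  have hω'c : Continuous (deriv ω) := hω1.continuous
  have hqd : ∀ s, HasDerivAt q (deriv q s) s := fun s =>
    (hq.differentiable (by norm_num) s).hasDerivAt
  constructor
  · refine e1.trans ?_
    gcongr
    linarith [abs_nonneg C₂, abs_nonneg C₃]
  · have hsplit : statAmpDeriv ω α s₀ s₁ Y σ z =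
        (∫ s in s₀..s₁, ((deriv ω (z * exp s) * exp s * exp s : ℝ) : ℂ) *
          osc (l * modelPhase α (s - σ))) +
        (z : ℂ)⁻¹ * ∫ s in s₀..s₁, ((ω (z * exp s) * exp s : ℝ) : ℂ) *
          ((l * modelPhase α (s - σ) : ℝ) * Complex.I) * osc (l * modelPhase α (s - σ)) := by
      rw [← intervalIntegral.integral_const_mul, ← intervalIntegral.integral_add
        (Continuous.intervalIntegrable (by fun_prop) _ _)
        (Continuous.intervalIntegrable (by fun_prop) _ _), statAmpDeriv]
      refine intervalIntegral.integral_congr fun s _ => ?_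
      simp only [hl]
      push_cast
      have : (z : ℂ) ≠ 0 := by exact_mod_cast hz0.ne'
      field_simp
    rw [hsplit, integral_mul_phase_mul_osc (f := fun s => ω (z * exp s) * exp s) (hωd z)
      (by fun_prop) hqd hq1.continuous hqH (by simp [v₀ z hz]) (by simp [v₁ z hz])]
    refine (norm_add_le _ _).trans ?_
    rw [norm_mul, norm_neg, norm_inv, Complex.norm_real, Real.norm_of_nonneg hz0.le]
    have h2 : z⁻¹ ≤ 1 := inv_le_one_of_one_le₀ hz.1
    calc _ ≤ |C₂| * |D| / √Y + 1 * (|C₃| * |D| / √Y) := by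
          gcongr
      _ = (|C₂| + |C₃|) * |D| / √Y := by ring
      _ ≤ _ := by
          gcongr
          linarith [abs_nonneg C₁]

/-- One integration by parts against a phase without critical points. -/
lemma integral_mul_osc_eq_of_nonstationary {a b l : ℝ} (hl : l ≠ 0) (hab : a ≤ b)
    {u v v' Γ g : ℝ → ℝ} (hΓ : ∀ s, HasDerivAt Γ (g s) s) (hg : Continuous g)
    (hg0 : ∀ s ∈ Set.Icc a b, g s ≠ 0)
    (huv : ∀ s ∈ Set.Icc a b, u s = v s * g s) (hv : ∀ s ∈ Set.Icc a b, HasDerivAt v (v' s) s)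
    (hv' : ContinuousOn v' (Set.Icc a b)) (ha : u a = 0) (hb : u b = 0) :
    ∫ s in a..b, (u s : ℂ) * osc (l * Γ s) =
      (Complex.I / l) * ∫ s in a..b, (v' s : ℂ) * osc (l * Γ s) := by
  have hΓc : Continuous Γ := continuous_iff_continuousAt.2 fun s => (hΓ s).continuousAt
  have hva : v a = 0 := by
    have := huv a ⟨le_rfl, hab⟩
    rw [ha] at this
    exact (mul_eq_zero.1 this.symm).resolve_right (hg0 a ⟨le_rfl, hab⟩)
  have hvb : v b = 0 := by
    have := huv b ⟨hab, le_rfl⟩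
    rw [hb] at this
    exact (mul_eq_zero.1 this.symm).resolve_right (hg0 b ⟨hab, le_rfl⟩)
  have h := intervalIntegral.integral_mul_deriv_eq_deriv_mul (a := a) (b := b)
    (u := fun s => (v s : ℂ)) (v := fun s => osc (l * Γ s)) (u' := fun s => (v' s : ℂ))
    (v' := fun s => ((l * g s : ℝ) : ℂ) * Complex.I * osc (l * Γ s))
    (fun s hs => (hv s (Set.uIcc_of_le hab ▸ hs)).ofReal_comp)
    (fun s _ => ((hΓ s).const_mul l).osc)
    (ContinuousOn.intervalIntegrable (by rw [Set.uIcc_of_le hab]; fun_prop))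
    (Continuous.intervalIntegrable (by fun_prop) _ _)
  simp only [hva, hvb, Complex.ofReal_zero, zero_mul, sub_zero, zero_sub] at h
  have h2 : ∫ s in a..b, (u s : ℂ) * osc (l * Γ s) =
      (1 / (l * Complex.I)) *
        ∫ s in a..b, (v s : ℂ) * (((l * g s : ℝ) : ℂ) * Complex.I * osc (l * Γ s)) := by
    rw [← intervalIntegral.integral_const_mul]
    refine intervalIntegral.integral_congr fun s hs => ?_
    have hl' : (l : ℂ) ≠ 0 := by exact_mod_cast hl
    rw [huv s (Set.uIcc_of_le hab ▸ hs)]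
    push_cast
    field_simp
  rw [h2, h]
  have hl' : (l : ℂ) ≠ 0 := by exact_mod_cast hl
  field_simp
  rw [Complex.I_sq]
  ring

/-- Two integrations by parts against a phase without critical points. -/
lemma norm_integral_mul_osc_le_of_nonstationary {a b l B K L : ℝ} (hl : 0 < l) (hab : a ≤ b)
    (hB : 0 < B) {f f₁ f₂ Γ g g₁ g₂ : ℝ → ℝ} (hf : ∀ s, HasDerivAt f (f₁ s) s)
    (hf₁ : ∀ s, HasDerivAt f₁ (f₂ s) s) (hf₂ : Continuous f₂) (hΓ : ∀ s, HasDerivAt Γ (g s) s)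
    (hg : ∀ s, HasDerivAt g (g₁ s) s) (hg₁ : ∀ s, HasDerivAt g₁ (g₂ s) s) (hg₂ : Continuous g₂)
    (hK : ∀ s ∈ Set.Icc a b, |f s| ≤ K ∧ |f₁ s| ≤ K ∧ |f₂ s| ≤ K)
    (hgB : ∀ s ∈ Set.Icc a b, B ≤ |g s|)
    (hL : ∀ s ∈ Set.Icc a b, |g₁ s| ≤ L * B ∧ |g₂ s| ≤ L * B)
    (ha : f a = 0) (hb : f b = 0) (ha₁ : f₁ a = 0) (hb₁ : f₁ b = 0) :
    ‖∫ s in a..b, (f s : ℂ) * osc (l * Γ s)‖ ≤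
      (b - a) * (K * (1 + 4 * L + 3 * L ^ 2)) / (l * B) ^ 2 := by
  have cf : Continuous f := continuous_iff_continuousAt.2 fun s => (hf s).continuousAt
  have cf₁ : Continuous f₁ := continuous_iff_continuousAt.2 fun s => (hf₁ s).continuousAt
  have cg : Continuous g := continuous_iff_continuousAt.2 fun s => (hg s).continuousAt
  have cg₁ : Continuous g₁ := continuous_iff_continuousAt.2 fun s => (hg₁ s).continuousAt
  have hg0 : ∀ s ∈ Set.Icc a b, g s ≠ 0 := fun s hs => abs_pos.1 (hB.trans_le (hgB s hs))
  have haI : a ∈ Set.Icc a b := ⟨le_rfl, hab⟩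
  have hK0 : 0 ≤ K := (abs_nonneg _).trans (hK a haI).1
  have hL0 : 0 ≤ L := by
    have := (abs_nonneg _).trans (hL a haI).1
    exact nonneg_of_mul_nonneg_left this hB
  set u₁ : ℝ → ℝ := fun s => (f₁ s * g s - f s * g₁ s) / g s ^ 2 with hu₁
  set u₂ : ℝ → ℝ := fun s => f₂ s / g s ^ 2 - 3 * f₁ s * g₁ s / g s ^ 3 - f s * g₂ s / g s ^ 3 +
    3 * f s * g₁ s ^ 2 / g s ^ 4 with hu₂
  have c₁ : ContinuousOn u₁ (Set.Icc a b) := by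
    refine ContinuousOn.div (by fun_prop) (by fun_prop) fun s hs => pow_ne_zero 2 (hg0 s hs)
  have c₂ : ContinuousOn u₂ (Set.Icc a b) := by
    refine ((ContinuousOn.sub (ContinuousOn.sub ?_ ?_) ?_).add ?_) <;>
    exact ContinuousOn.div (by fun_prop) (by fun_prop) fun s hs => pow_ne_zero _ (hg0 s hs)
  have hu₁d : ∀ s ∈ Set.Icc a b, HasDerivAt (fun s => u₁ s / g s) (u₂ s) s := by
    intro s hs
    have h := (((hf₁ s).mul (hg s)).sub ((hf s).mul (hg₁ s))).div ((hg s).pow 2)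
      (pow_ne_zero 2 (hg0 s hs))
    refine (h.div (hg s) (hg0 s hs)).congr_deriv ?_
    have := hg0 s hs
    simp only [hu₂, Pi.pow_apply, Pi.mul_apply, Pi.sub_apply, Pi.div_apply]
    field_simp
    push_cast
    ring
  rw [integral_mul_osc_eq_of_nonstationary hl.ne' hab (u := f) (v := fun s => f s / g s) (v' := u₁)
    hΓ cg hg0 (fun s hs => by field_simp [hg0 s hs]) (fun s hs => (hf s).div (hg s) (hg0 s hs))
    c₁ ha hb,
    integral_mul_osc_eq_of_nonstationary hl.ne' hab (u := u₁) (v := fun s => u₁ s / g s) (v' := u₂)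
    hΓ cg hg0 (fun s hs => by field_simp [hg0 s hs]) hu₁d c₂ (by simp [hu₁, ha, ha₁])
    (by simp [hu₁, hb, hb₁])]
  rw [norm_mul, norm_mul, norm_div, Complex.norm_I, Complex.norm_real, Real.norm_of_nonneg hl.le]
  have hbd : ∀ s ∈ Set.Icc a b, ‖(u₂ s : ℂ) * osc (l * Γ s)‖ ≤
      K * (1 + 4 * L + 3 * L ^ 2) / B ^ 2 := by
    intro s hs
    rw [norm_mul, norm_osc, mul_one, Complex.norm_real, Real.norm_eq_abs]
    obtain ⟨k0, k1, k2⟩ := hK s hs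
    obtain ⟨l1, l2⟩ := hL s hs
    have hgp : 0 < |g s| := hB.trans_le (hgB s hs)
    have r1 : |g₁ s| ≤ L * |g s| := l1.trans (by gcongr; exact hgB s hs)
    have r2 : |g₂ s| ≤ L * |g s| := l2.trans (by gcongr; exact hgB s hs)
    have t1 : |f₂ s / g s ^ 2| ≤ K / |g s| ^ 2 := by
      rw [abs_div, abs_pow]; gcongr
    have t2 : |3 * f₁ s * g₁ s / g s ^ 3| ≤ 3 * K * L / |g s| ^ 2 := by
      rw [abs_div, abs_pow, abs_mul, abs_mul, abs_of_pos (by norm_num : (0 : ℝ) < 3)]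
      calc 3 * |f₁ s| * |g₁ s| / |g s| ^ 3 ≤ 3 * K * (L * |g s|) / |g s| ^ 3 := by gcongr
        _ = _ := by field_simp
    have t3 : |f s * g₂ s / g s ^ 3| ≤ K * L / |g s| ^ 2 := by
      rw [abs_div, abs_pow, abs_mul]
      calc |f s| * |g₂ s| / |g s| ^ 3 ≤ K * (L * |g s|) / |g s| ^ 3 := by gcongr
        _ = _ := by field_simp
    have t4 : |3 * f s * g₁ s ^ 2 / g s ^ 4| ≤ 3 * K * L ^ 2 / |g s| ^ 2 := by
      rw [abs_div, abs_pow, abs_mul, abs_mul, abs_of_pos (by norm_num : (0 : ℝ) < 3), abs_pow]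
      calc 3 * |f s| * |g₁ s| ^ 2 / |g s| ^ 4 ≤ 3 * K * (L * |g s|) ^ 2 / |g s| ^ 4 := by gcongr
        _ = _ := by field_simp
    calc |u₂ s| ≤ K / |g s| ^ 2 + 3 * K * L / |g s| ^ 2 + K * L / |g s| ^ 2 +
          3 * K * L ^ 2 / |g s| ^ 2 := by
          refine (abs_add_le _ _).trans (add_le_add ((abs_sub _ _).trans
            (add_le_add ((abs_sub _ _).trans (add_le_add t1 t2)) t3)) t4)
      _ = K * (1 + 4 * L + 3 * L ^ 2) / |g s| ^ 2 := by ring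
      _ ≤ _ := by gcongr; exact hgB s hs
  have := intervalIntegral.norm_integral_le_of_norm_le_const (a := a) (b := b)
    (C := K * (1 + 4 * L + 3 * L ^ 2) / B ^ 2) (f := fun s => (u₂ s : ℂ) * osc (l * Γ s))
    (fun s hs => hbd s (by rw [Set.uIoc_of_le hab] at hs; exact ⟨hs.1.le, hs.2⟩))
  rw [abs_of_nonneg (sub_nonneg.2 hab)] at this
  calc 1 / l * (1 / l * _) ≤ 1 / l * (1 / l * (K * (1 + 4 * L + 3 * L ^ 2) / B ^ 2 * (b - a))) := by
        gcongr
    _ = _ := by field_simp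

lemma exists_nonstationary_bound {α : ℝ} (hα0 : α ≠ 0) (hα1 : α < 1) {ω : ℝ → ℝ}
    (hω : ContDiff ℝ 3 ω) {s₀ s₁ : ℝ} (hs : s₀ ≤ s₁)
    (h₀ : ∀ z ∈ Set.Icc (1 : ℝ) 2, ω =ᶠ[nhds (z * exp s₀)] 0)
    (h₁ : ∀ z ∈ Set.Icc (1 : ℝ) 2, ω =ᶠ[nhds (z * exp s₁)] 0) :
    ∃ C : ℝ, 0 ≤ C ∧ ∀ Y, 0 < Y → ∀ z ∈ Set.Icc (1 : ℝ) 2, ∀ ν : ℝ,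
      (ν < exp (-(1 - α) * (s₁ + 1)) ∨ exp (-(1 - α) * (s₀ - 1)) < ν) →
      ‖∫ s in s₀..s₁, ((ω (z * exp s) * exp s : ℝ) : ℂ) *
        osc (Y * z * (exp (α * s) - α * ν * exp s))‖ ≤ C / (Y * (1 + |ν|)) ^ 2 := by
  have hω1 : ContDiff ℝ 2 (deriv ω) := hω.deriv' (n := 2)
  have hω2 : ContDiff ℝ 1 (deriv (deriv ω)) := hω1.deriv' (n := 1)
  have hωc : Continuous ω := hω.continuous
  have hω1c : Continuous (deriv ω) := hω1.continuous
  have hω2c : Continuous (deriv (deriv ω)) := hω2.continuous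
  set γ := 1 - α with hγ
  have hγ0 : 0 < γ := by linarith
  have hωd : ∀ z s : ℝ, HasDerivAt (fun s => ω (z * exp s)) (deriv ω (z * exp s) * (z * exp s)) s :=
    fun z s => (hω.differentiable (by norm_num) (z * exp s)).hasDerivAt.comp s
      ((hasDerivAt_exp s).const_mul z)
  have hωd1 : ∀ z s : ℝ, HasDerivAt (fun s => deriv ω (z * exp s))
      (deriv (deriv ω) (z * exp s) * (z * exp s)) s :=
    fun z s => HasDerivAt.comp (h₂ := deriv ω) s
      (hω1.differentiable (by norm_num) (z * exp s)).hasDerivAt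
      ((hasDerivAt_exp s).const_mul z)
  set f : ℝ → ℝ → ℝ := fun z s => ω (z * exp s) * exp s with hf
  set f₁ : ℝ → ℝ → ℝ := fun z s => deriv ω (z * exp s) * (z * exp s) * exp s +
    ω (z * exp s) * exp s with hf₁
  set f₂ : ℝ → ℝ → ℝ := fun z s => (deriv (deriv ω) (z * exp s) * (z * exp s) * (z * exp s) +
    deriv ω (z * exp s) * (z * exp s)) * exp s + deriv ω (z * exp s) * (z * exp s) * exp s +
    (deriv ω (z * exp s) * (z * exp s) * exp s + ω (z * exp s) * exp s) with hf₂
  have hcomp : IsCompact (Set.Icc (1 : ℝ) 2 ×ˢ Set.Icc s₀ s₁) := isCompact_Icc.prod isCompact_Icc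
  obtain ⟨K₀, hK₀⟩ := hcomp.exists_bound_of_continuousOn (f := fun p => f p.1 p.2) (by fun_prop)
  obtain ⟨K₁, hK₁⟩ := hcomp.exists_bound_of_continuousOn (f := fun p => f₁ p.1 p.2) (by fun_prop)
  obtain ⟨K₂, hK₂⟩ := hcomp.exists_bound_of_continuousOn (f := fun p => f₂ p.1 p.2) (by fun_prop)
  set K := |K₀| + |K₁| + |K₂| with hK
  -- lower bound for the derivative of the phase
  obtain ⟨c, hc, hclow⟩ : ∃ c : ℝ, 0 < c ∧ ∀ ν : ℝ,
      (ν < exp (-γ * (s₁ + 1)) ∨ exp (-γ * (s₀ - 1)) < ν) → ∀ s ∈ Set.Icc s₀ s₁,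
      c * (1 + |ν|) ≤ |exp (-γ * s) - ν| := by
    have hk : exp (-γ) < 1 := by rw [exp_lt_one_iff]; linarith
    set θ := 1 - exp (-γ) with hθ
    have hθ0 : 0 < θ := by linarith
    have hθ1 : θ ≤ 1 := by linarith [exp_pos (-γ)]
    set A := exp (-γ * s₁) with hA
    have hA0 : 0 < A := exp_pos _
    have hsh : exp (-γ * (s₁ + 1)) = A * exp (-γ) := by rw [hA, ← exp_add]; ring_nf
    refine ⟨θ * min A 1 / 2, by positivity, fun ν hν s hs' => ?_⟩
    have hm0 : 0 < min A 1 := by positivity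
    have hm1 : min A 1 ≤ 1 := min_le_right _ _
    have hmA : min A 1 ≤ A := min_le_left _ _
    have hAs : A ≤ exp (-γ * s) := by
      rw [hA, exp_le_exp]
      nlinarith [hs'.2]
    rcases hν with hν | hν
    · rw [hsh] at hν
      have h1 : θ * A ≤ exp (-γ * s) - ν := by rw [hθ]; linarith
      refine le_trans ?_ (le_abs_self _)
      rcases le_or_gt 0 ν with h0 | h0
      · rw [abs_of_nonneg h0]
        have h2 : ν ≤ A := by nlinarith [exp_pos (-γ)]
        have h3 : min A 1 * ν ≤ A := by nlinarith
        nlinarith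
      · rw [abs_of_neg h0]
        have h2 : A - ν ≤ exp (-γ * s) - ν := by linarith
        have h3 : θ * min A 1 ≤ 1 := by nlinarith
        have h4 : θ * min A 1 ≤ A := by nlinarith
        nlinarith
    · have hBs : exp (-γ * s) ≤ exp (-γ) * ν := by
        have e1 : exp (-γ * s) ≤ exp (-γ) * exp (-γ * (s₀ - 1)) := by
          rw [← exp_add, exp_le_exp]
          nlinarith [hs'.1]
        exact e1.trans (mul_le_mul_of_nonneg_left hν.le (exp_pos _).le)
      have hν0 : 0 < ν := (exp_pos _).trans hν
      have hAν : A ≤ ν := by nlinarith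
      rw [abs_sub_comm, abs_of_pos hν0]
      refine le_trans ?_ (le_abs_self _)
      have h1 : θ * ν ≤ ν - exp (-γ * s) := by rw [hθ]; linarith
      have h2 : min A 1 * (1 + ν) ≤ 2 * ν := by nlinarith
      nlinarith
  obtain ⟨m, hm, hmlow⟩ : ∃ m : ℝ, 0 < m ∧ ∀ s ∈ Set.Icc s₀ s₁, m ≤ exp s :=
    ⟨exp s₀, exp_pos _, fun s hs' => exp_le_exp.2 hs'.1⟩
  obtain ⟨D₁, hD₁⟩ := (isCompact_Icc (a := s₀) (b := s₁)).exists_bound_of_continuousOn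
    (f := fun s => |α ^ 2 * exp (α * s)| + |α ^ 3 * exp (α * s)| + |α * exp s|) (by fun_prop)
  set L := |D₁| / (|α| * m * c) with hL
  have hα' : 0 < |α| := abs_pos.2 hα0
  set C := (s₁ - s₀) * (K * (1 + 4 * L + 3 * L ^ 2)) / (|α| * m * c) ^ 2 with hC
  have hL0 : 0 ≤ L := by positivity
  refine ⟨C, by have := sub_nonneg.2 hs; positivity, fun Y hY z hz ν hν => ?_⟩
  have hz0 : 0 < z := lt_of_lt_of_le one_pos hz.1
  have hν1 : 0 < 1 + |ν| := by positivity
  have hg : ∀ s, HasDerivAt (fun s => exp (α * s) - α * ν * exp s)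
      (α * exp (α * s) - α * ν * exp s) s := by
    intro s
    have h := (((hasDerivAt_id s).const_mul α).exp).sub ((hasDerivAt_exp s).const_mul (α * ν))
    refine h.congr_deriv ?_
    simp only [id]
    ring
  have hgg : ∀ k : ℝ, ∀ s, HasDerivAt (fun s => k * exp (α * s) - α * ν * exp s)
      (k * α * exp (α * s) - α * ν * exp s) s := by
    intro k s
    have h := ((((hasDerivAt_id s).const_mul α).exp).const_mul k).sub
      ((hasDerivAt_exp s).const_mul (α * ν))
    refine h.congr_deriv ?_
    simp only [id]
    ring
  have v₀ : ω (z * exp s₀) = 0 ∧ deriv ω (z * exp s₀) = 0 :=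
    ⟨(h₀ z hz).eq_of_nhds, by rw [(h₀ z hz).deriv_eq]; simp⟩
  have v₁ : ω (z * exp s₁) = 0 ∧ deriv ω (z * exp s₁) = 0 :=
    ⟨(h₁ z hz).eq_of_nhds, by rw [(h₁ z hz).deriv_eq]; simp⟩
  have hup : ∀ s ∈ Set.Icc s₀ s₁, ∀ k : ℝ, |k * exp (α * s)| ≤ |D₁| - |α * exp s| →
      |k * exp (α * s) - α * ν * exp s| ≤ L * (|α| * m * c * (1 + |ν|)) := by
    intro s hs' k hk
    have e1 : L * (|α| * m * c * (1 + |ν|)) = |D₁| * (1 + |ν|) := by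
      rw [hL]; field_simp
    rw [e1]
    have e2 : |α * ν * exp s| = |α * exp s| * |ν| := by
      rw [← abs_mul]; ring_nf
    have e3 : |α * exp s| ≤ |D₁| := by linarith [abs_nonneg (k * exp (α * s))]
    calc |k * exp (α * s) - α * ν * exp s| ≤ |k * exp (α * s)| + |α * ν * exp s| := abs_sub _ _
      _ ≤ |D₁| + |D₁| * |ν| := by
          rw [e2]
          exact add_le_add (by linarith [abs_nonneg (α * exp s)])
            (mul_le_mul_of_nonneg_right e3 (abs_nonneg ν))
      _ = _ := by ring
  have hDs : ∀ s ∈ Set.Icc s₀ s₁,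
      |α ^ 2 * exp (α * s)| + |α ^ 3 * exp (α * s)| + |α * exp s| ≤ |D₁| := by
    intro s hs'
    have := hD₁ s hs'
    rw [Real.norm_of_nonneg (by positivity)] at this
    exact this.trans (le_abs_self _)
  have main := norm_integral_mul_osc_le_of_nonstationary (a := s₀) (b := s₁) (l := Y * z)
    (B := |α| * m * c * (1 + |ν|)) (K := K) (L := L) (by positivity) hs (by positivity)
    (f := f z) (f₁ := f₁ z) (f₂ := f₂ z) (Γ := fun s => exp (α * s) - α * ν * exp s)
    (g := fun s => α * exp (α * s) - α * ν * exp s)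
    (g₁ := fun s => α * α * exp (α * s) - α * ν * exp s)
    (g₂ := fun s => α * α * α * exp (α * s) - α * ν * exp s)
    (fun s => (hωd z s).mul (hasDerivAt_exp s))
    (fun s => (((hωd1 z s).mul ((hasDerivAt_exp s).const_mul z)).mul (hasDerivAt_exp s)).add
      ((hωd z s).mul (hasDerivAt_exp s)))
    (by fun_prop) hg (hgg α) (hgg (α * α)) (by fun_prop)
    (fun s hs' => ?_) (fun s hs' => ?_) (fun s hs' => ⟨?_, ?_⟩)
    (by simp [hf, v₀]) (by simp [hf, v₁]) (by simp [hf₁, v₀]) (by simp [hf₁, v₁])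
  · refine main.trans ?_
    have : C / (Y * (1 + |ν|)) ^ 2 = (s₁ - s₀) * (K * (1 + 4 * L + 3 * L ^ 2)) /
        (Y * 1 * (|α| * m * c * (1 + |ν|))) ^ 2 := by
      rw [hC]; field_simp
    rw [this]
    have := sub_nonneg.2 hs
    gcongr
    exact hz.1
  · have k0 := hK₀ (z, s) ⟨hz, hs'⟩
    have k1 := hK₁ (z, s) ⟨hz, hs'⟩
    have k2 := hK₂ (z, s) ⟨hz, hs'⟩
    simp only [Real.norm_eq_abs] at k0 k1 k2
    refine ⟨?_, ?_, ?_⟩ <;>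
    linarith [le_abs_self K₀, le_abs_self K₁, le_abs_self K₂, abs_nonneg K₀, abs_nonneg K₁,
      abs_nonneg K₂]
  · have e1 : α * exp (α * s) - α * ν * exp s = α * exp s * (exp (-γ * s) - ν) := by
      rw [mul_sub, mul_assoc α (exp s) (exp (-γ * s)), ← exp_add, hγ]
      ring_nf
    rw [e1, abs_mul, abs_mul, abs_of_pos (exp_pos s), mul_assoc (|α| * m)]
    gcongr
    · exact hmlow s hs'
    · exact hclow ν hν s hs'
  · refine hup s hs' _ ?_
    rw [show α * α = α ^ 2 by ring]
    linarith [hDs s hs', abs_nonneg (α ^ 3 * exp (α * s))]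
  · refine hup s hs' _ ?_
    rw [show α * α * α = α ^ 3 by ring]
    linarith [hDs s hs', abs_nonneg (α ^ 2 * exp (α * s))]

/-- The smoothed exponential sum with phase `y (n / N) ^ α`. -/
noncomputable def smoothSum (ω : ℝ → ℝ) (α b N y : ℝ) : ℂ :=
  ∑ n ∈ Finset.range (⌊b * N⌋₊ + 1), (ω (n / N) : ℂ) * osc (y * ((n : ℝ) / N) ^ α)

/-- The oscillatory integral dual to the frequency `ν`. -/
noncomputable def dualInt (ω : ℝ → ℝ) (α s₀ s₁ Y ν z : ℝ) : ℂ :=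
  ∫ s in s₀..s₁, ((ω (z * exp s) * exp s : ℝ) : ℂ) *
    osc (Y * z * (exp (α * s) - α * ν * exp s))

lemma fourier_smoothSum_summand {ω : ℝ → ℝ} (hω : Continuous ω) {α a₀ b₀ s₀ s₁ : ℝ}
    (ha₀ : 0 < a₀) (hl : ∀ x ≤ a₀, ω x = 0) (hr : ∀ x ≥ b₀, ω x = 0)
    (hs₀ : 2 * exp s₀ < a₀) (hs₁ : b₀ < exp s₁) {N Y z : ℝ} (hN : 0 < N)
    (hz : z ∈ Set.Icc (1 : ℝ) 2) (ξ ν : ℝ) (hν : Y * (α * ν) = 2 * π * N * ξ) :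
    FourierTransform.fourier
        (fun x : ℝ => (ω (x / N) : ℂ) * osc (Y * z ^ (1 - α) * (max (x / N) a₀) ^ α)) ξ =
      N * z * dualInt ω α s₀ s₁ Y ν z := by
  have hz0 : 0 < z := lt_of_lt_of_le one_pos hz.1
  have hmax : Continuous fun x : ℝ => (max (x / N) a₀) ^ α :=
    Continuous.rpow_const (by fun_prop) fun x => Or.inl (lt_max_of_lt_right ha₀).ne'
  have hexp : Continuous fun v : ℝ => Complex.exp (↑(-2 * π * v * ξ) * Complex.I) := by fun_prop
  have hz2 : z * exp s₀ ≤ a₀ := by nlinarith [exp_pos s₀, hz.2]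
  have hz3 : b₀ ≤ z * exp s₁ := by nlinarith [exp_pos s₁, hz.1]
  rw [Real.fourier_real_eq_integral_exp_smul,
    ← intervalIntegral.integral_eq_integral_of_support_subset (a := N * z * exp s₀)
      (b := N * z * exp s₁),
    ← intervalIntegral.integral_deriv_smul_comp (f := fun s => N * z * exp s)
      (f' := fun s => N * z * exp s) (fun s _ => (hasDerivAt_exp s).const_mul _)
      (by fun_prop) (by fun_prop), dualInt, ← intervalIntegral.integral_const_mul]
  · refine intervalIntegral.integral_congr fun s hs => ?_
    simp only [Function.comp, smul_eq_mul, Complex.real_smul]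
    have e1 : N * z * exp s / N = z * exp s := by field_simp
    rw [e1]
    by_cases hA : z * exp s ≤ a₀
    · simp [hl _ hA]
    · rw [max_eq_left (not_le.1 hA).le]
      have e2 : Y * z ^ (1 - α) * (z * exp s) ^ α = Y * z * exp (α * s) := by
        rw [mul_rpow hz0.le (exp_pos s).le, ← exp_mul, mul_comm s α]
        have : z ^ (1 - α) * z ^ α = z := by rw [← rpow_add hz0]; simp
        linear_combination (Y * exp (α * s)) * this
      have e3 : Y * z * (exp (α * s) - α * ν * exp s) =
          Y * z * exp (α * s) + -2 * π * (N * z * exp s) * ξ := by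
        linear_combination (-z * exp s) * hν
      rw [e2, e3, osc_add]
      simp only [osc]
      push_cast
      ring
  · intro x hx
    simp only [Function.mem_support, smul_eq_mul] at hx
    have hx0 : ω (x / N) ≠ 0 := by
      intro h; simp [h] at hx
    have h1 : a₀ < x / N := by by_contra h; exact hx0 (hl _ (not_lt.1 h))
    have h2 : x / N < b₀ := by by_contra h; exact hx0 (hr _ (not_lt.1 h))
    have h3 : x = N * (x / N) := by field_simp
    rw [h3]
    constructor <;> nlinarith

lemma smoothSum_eq_tsum {ω : ℝ → ℝ} {α a₀ b₀ : ℝ} (ha₀ : 0 < a₀) (hl : ∀ x ≤ a₀, ω x = 0)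
    (hr : ∀ x ≥ b₀, ω x = 0) {N : ℝ} (hN : 0 < N) (y : ℝ) :
    smoothSum ω α b₀ N y =
      ∑' n : ℤ, (ω ((n : ℝ) / N) : ℂ) * osc (y * (max ((n : ℝ) / N) a₀) ^ α) := by
  rw [tsum_eq_sum (s := (Finset.range (⌊b₀ * N⌋₊ + 1)).map Nat.castEmbedding), Finset.sum_map]
  · refine Finset.sum_congr rfl fun n _ => ?_
    simp only [Nat.castEmbedding_apply, Int.cast_natCast]
    by_cases h : (n : ℝ) / N ≤ a₀
    · simp [hl _ h]
    · rw [max_eq_left (not_le.1 h).le]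
  · intro n hn
    by_cases h : (n : ℝ) / N ≤ a₀
    · simp [hl _ h]
    · rw [hr, Complex.ofReal_zero, zero_mul]
      have h0 : 0 < (n : ℝ) / N := ha₀.trans (not_le.1 h)
      have hn0 : 0 < (n : ℝ) := by
        have := mul_pos h0 hN
        rwa [div_mul_cancel₀ _ hN.ne'] at this
      have hn1 : 0 < n := by exact_mod_cast hn0
      lift n to ℕ using hn1.le
      have h2 : ⌊b₀ * N⌋₊ < n := by
        by_contra h'
        exact hn (Finset.mem_map.2 ⟨n, Finset.mem_range.2 (by omega), rfl⟩)
      rw [ge_iff_le, le_div_iff₀ hN]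
      exact_mod_cast (Nat.lt_of_floor_lt h2).le

/-- Poisson summation for the smoothed exponential sum, up to a power saving error. -/
lemma exists_smoothSum_approx {ω : ℝ → ℝ} (hω : ContDiff ℝ 3 ω) {α a₀ b₀ s₀ s₁ : ℝ}
    (hα0 : α ≠ 0) (hα1 : α < 1) (ha₀ : 0 < a₀) (hab : a₀ < b₀) (hl : ∀ x ≤ a₀, ω x = 0)
    (hr : ∀ x ≥ b₀, ω x = 0) (hs₀ : 2 * exp s₀ < a₀) (hs₁ : b₀ < exp s₁) :
    ∃ C : ℝ, 0 ≤ C ∧ ∀ N Y M : ℝ, 0 < N → 0 < Y → M = Y / (2 * π * N) →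
      ∀ z ∈ Set.Icc (1 : ℝ) 2,
      ‖smoothSum ω α b₀ N (Y * z ^ (1 - α)) - N * z *
        ∑ m ∈ Finset.Icc ⌈|α| * exp (-(1 - α) * (s₁ + 1)) * M⌉₊
            ⌊|α| * exp (-(1 - α) * (s₀ - 1)) * M⌋₊,
          dualInt ω α s₀ s₁ Y (m / (|α| * M)) z‖ ≤ C * (N / Y ^ 2 + 1 / N) := by
  have hs : s₀ ≤ s₁ := by
    rw [← exp_le_exp]; nlinarith [exp_pos s₀]
  have hz₀ : ∀ z ∈ Set.Icc (1 : ℝ) 2, ω =ᶠ[nhds (z * exp s₀)] 0 := fun z hz => by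
    have : z * exp s₀ < a₀ := by nlinarith [exp_pos s₀, hz.2]
    filter_upwards [gt_mem_nhds this] with x hx using hl x hx.le
  have hz₁ : ∀ z ∈ Set.Icc (1 : ℝ) 2, ω =ᶠ[nhds (z * exp s₁)] 0 := fun z hz => by
    have : b₀ < z * exp s₁ := by nlinarith [exp_pos s₁, hz.1]
    filter_upwards [lt_mem_nhds this] with x hx using hr x hx.le
  obtain ⟨C, hC, hCb⟩ := exists_nonstationary_bound hα0 hα1 hω hs hz₀ hz₁
  have hsum := (Real.summable_one_div_int_pow (p := 2)).2 one_lt_two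
  set Z : ℝ := ∑' n : ℤ, 1 / (n : ℝ) ^ 2 with hZ
  have hZ0 : 0 ≤ Z := tsum_nonneg fun n => by positivity
  have hα' : 0 < |α| := abs_pos.2 hα0
  refine ⟨2 * C * (1 + |α| ^ 2 * Z), by positivity, fun N Y M hN hY hM z hz => ?_⟩
  have hz0 : 0 < z := lt_of_lt_of_le one_pos hz.1
  have hM0 : 0 < M := by rw [hM]; positivity
  set T := (Finset.Icc ⌈|α| * exp (-(1 - α) * (s₁ + 1)) * M⌉₊
    ⌊|α| * exp (-(1 - α) * (s₀ - 1)) * M⌋₊).map (Nat.castEmbedding (R := ℤ)) with hT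
  set F : ℤ → ℂ := fun m => dualInt ω α s₀ s₁ Y ((m : ℝ) / (|α| * M)) z with hF
  have hnon : ∀ m : ℤ, m ∉ T → ((m : ℝ) / (|α| * M) < exp (-(1 - α) * (s₁ + 1)) ∨
      exp (-(1 - α) * (s₀ - 1)) < (m : ℝ) / (|α| * M)) := by
    intro m hm
    by_contra! h
    obtain ⟨h1, h2⟩ := h
    rw [le_div_iff₀ (by positivity)] at h1
    rw [div_le_iff₀ (by positivity)] at h2
    have hm0 : (0 : ℝ) ≤ m := le_trans (by positivity) h1
    have hm1 : 0 ≤ m := by exact_mod_cast hm0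
    lift m to ℕ using hm1
    refine hm (Finset.mem_map.2 ⟨m, Finset.mem_Icc.2 ⟨?_, ?_⟩, rfl⟩)
    · refine Nat.ceil_le.2 (le_trans (le_of_eq (by ring)) h1)
    · refine Nat.le_floor (le_trans h2 (le_of_eq (by ring)))
  set g : ℤ → ℝ := fun m => C / Y ^ 2 * ((if m = 0 then 1 else 0) +
    |α| ^ 2 * M ^ 2 * (1 / (m : ℝ) ^ 2)) with hg
  have hgsum : HasSum g (C / Y ^ 2 * (1 + |α| ^ 2 * M ^ 2 * Z)) :=
    ((hasSum_ite_eq (0 : ℤ) (1 : ℝ)).add (hsum.hasSum.mul_left _)).mul_left _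
  have hFb : ∀ m : ℤ, m ∉ T → ‖F m‖ ≤ g m := by
    intro m hm
    refine (hCb Y hY z hz _ (hnon m hm)).trans ?_
    rw [hg, mul_pow, ← div_div, div_eq_mul_one_div (C / Y ^ 2)]
    refine mul_le_mul_of_nonneg_left ?_ (by positivity)
    by_cases h0 : m = 0
    · simp [h0]
    · have hm0 : (m : ℝ) ≠ 0 := by exact_mod_cast h0
      have : |α| ^ 2 * M ^ 2 * (1 / (m : ℝ) ^ 2) = 1 / (|(m : ℝ) / (|α| * M)|) ^ 2 := by
        rw [sq_abs ((m : ℝ) / (|α| * M))]; field_simp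
      rw [this, if_neg h0, zero_add]
      have : 0 < |(m : ℝ) / (|α| * M)| := by positivity
      gcongr
      linarith
  have hFsum : Summable F := by
    refine Summable.of_norm_bounded_eventually hgsum.summable ?_
    filter_upwards [T.finite_toSet.compl_mem_cofinite] with m hm using hFb m hm
  -- Poisson summation
  obtain ⟨e, he⟩ : ∃ e : ℤ ≃ ℤ, ∀ m : ℤ, |α| * ((e m : ℤ) : ℝ) = α * m := by
    rcases lt_or_gt_of_ne hα0 with h | h
    · exact ⟨Equiv.neg ℤ, fun m => by rw [abs_of_neg h]; simp⟩
    · exact ⟨Equiv.refl ℤ, fun m => by rw [abs_of_pos h]; simp⟩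
  have hFT : ∀ m : ℤ, FourierTransform.fourier (fun x : ℝ => (ω (x / N) : ℂ) *
      osc (Y * z ^ (1 - α) * (max (x / N) a₀) ^ α)) (m : ℝ) = N * z * F (e m) := by
    intro m
    refine fourier_smoothSum_summand hω.continuous ha₀ hl hr hs₀ hs₁ hN hz _ _ ?_
    have h1 := he m
    have h2 : α * ((e m : ℤ) : ℝ) = |α| * m := by
      have : |α| * |α| = α * α := abs_mul_abs_self α
      apply mul_left_cancel₀ hα'.ne'
      linear_combination α * h1 - (m : ℝ) * this
    have h3 : Y * (α * (((e m : ℤ) : ℝ) / (|α| * M))) = Y / (|α| * M) * (α * ((e m : ℤ) : ℝ)) := by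
      ring
    rw [h3, h2, hM]
    field_simp
  have hpoisson : smoothSum ω α b₀ N (Y * z ^ (1 - α)) = N * z * ∑' m, F m := by
    rw [smoothSum_eq_tsum ha₀ hl hr hN]
    have hmax : Continuous fun x : ℝ => (max (x / N) a₀) ^ α :=
      Continuous.rpow_const (by fun_prop) fun x => Or.inl (lt_max_of_lt_right ha₀).ne'
    have hωc := hω.continuous
    have h := Real.tsum_eq_tsum_fourier_of_rpow_decay_of_summable
      (f := fun x : ℝ => (ω (x / N) : ℂ) * osc (Y * z ^ (1 - α) * (max (x / N) a₀) ^ α))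
      (by fun_prop) (b := 2) one_lt_two ?_ ?_ 0
    · simp only [zero_add] at h
      rw [h, ← e.tsum_eq F, ← tsum_mul_left]
      refine tsum_congr fun m => ?_
      rw [hFT m]
      simp
    · refine Asymptotics.IsBigO.of_bound 1 ?_
      have hK : IsCompact (Set.Icc (a₀ * N) (b₀ * N)) := isCompact_Icc
      filter_upwards [hK.compl_mem_cocompact] with x hx
      have h0 : ω (x / N) = 0 := by
        by_contra hne
        have h1 : a₀ < x / N := by by_contra h; exact hne (hl _ (not_lt.1 h))
        have h2 : x / N < b₀ := by by_contra h; exact hne (hr _ (not_lt.1 h))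
        rw [lt_div_iff₀ hN] at h1
        rw [div_lt_iff₀ hN] at h2
        exact hx ⟨h1.le, h2.le⟩
      rw [h0]
      simp only [Complex.ofReal_zero, zero_mul, norm_zero]
      positivity
    · simp_rw [hFT]
      exact ((e.summable_iff (f := F)).2 hFsum).mul_left _
  have hTsum : ∑ m ∈ Finset.Icc ⌈|α| * exp (-(1 - α) * (s₁ + 1)) * M⌉₊
      ⌊|α| * exp (-(1 - α) * (s₀ - 1)) * M⌋₊, dualInt ω α s₀ s₁ Y (m / (|α| * M)) z =
      ∑ m ∈ T, F m := by
    rw [hT, Finset.sum_map]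
    simp [hF]
  have hdiff : ∑' m, F m - ∑ m ∈ T, F m = ∑' m, (if m ∈ T then 0 else F m) := by
    have h1 : ∑ m ∈ T, F m = ∑' m, (if m ∈ T then F m else 0) := by
      rw [tsum_eq_sum (s := T) (fun m hm => if_neg hm)]
      exact Finset.sum_congr rfl fun m hm => (if_pos hm).symm
    rw [h1, ← hFsum.tsum_sub]
    · refine tsum_congr fun m => ?_
      split_ifs <;> simp
    · exact summable_of_ne_finset_zero (s := T) fun m hm => if_neg hm
  rw [hpoisson, hTsum, ← mul_sub, hdiff, norm_mul, norm_mul, Complex.norm_real, Complex.norm_real,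
    Real.norm_of_nonneg hN.le, Real.norm_of_nonneg hz0.le]
  have hfin := tsum_of_norm_bounded (f := fun m => if m ∈ T then 0 else F m) hgsum (fun m => by
    by_cases hm : m ∈ T
    · simp only [if_pos hm, norm_zero, hg]; positivity
    · simp only [if_neg hm]; exact hFb m hm)
  calc N * z * _ ≤ N * 2 * (C / Y ^ 2 * (1 + |α| ^ 2 * M ^ 2 * Z)) := by
        gcongr
        exact hz.2
    _ = 2 * C * (N / Y ^ 2 + |α| ^ 2 * Z * (1 / (2 * π) ^ 2) * (1 / N)) := by
        rw [hM]; field_simp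
    _ ≤ 2 * C * ((1 + |α| ^ 2 * Z) * (N / Y ^ 2) + (1 + |α| ^ 2 * Z) * 1 * (1 / N)) := by
        have h1 : 1 / (2 * π) ^ 2 ≤ 1 := by
          rw [div_le_one (by positivity)]
          nlinarith [pi_gt_three]
        have h2 : (0 : ℝ) ≤ |α| ^ 2 * Z := by positivity
        gcongr
        · exact le_mul_of_one_le_left (by positivity) (by linarith)
        · linarith
    _ = _ := by ring

/-- Quadruples of elements of `A`. -/
def quads (A : Finset ℕ) : Finset (ℕ × ℕ × ℕ × ℕ) := A ×ˢ A ×ˢ A ×ˢ A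

/-- The additive gap `t n₁ + t n₂ - t n₃ - t n₄`. -/
def quadGap (t : ℕ → ℝ) (q : ℕ × ℕ × ℕ × ℕ) : ℝ := t q.1 + t q.2.1 - t q.2.2.1 - t q.2.2.2

lemma mem_quads {A : Finset ℕ} {q : ℕ × ℕ × ℕ × ℕ} :
    q ∈ quads A ↔ q.1 ∈ A ∧ q.2.1 ∈ A ∧ q.2.2.1 ∈ A ∧ q.2.2.2 ∈ A := by
  simp [quads]

lemma card_quads (A : Finset ℕ) : (quads A).card = A.card ^ 4 := by
  simp only [quads, Finset.card_product]; ring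

/-- Expansion of the fourth power of an exponential sum. -/
lemma norm_sum_mul_osc_pow_four (A : Finset ℕ) (b : ℕ → ℂ) (t : ℕ → ℝ) (z : ℝ) :
    ((‖∑ m ∈ A, b m * osc (z * t m)‖ ^ 4 : ℝ) : ℂ) =
      ∑ q ∈ quads A, b q.1 * b q.2.1 * (starRingEnd ℂ (b q.2.2.1) * starRingEnd ℂ (b q.2.2.2)) *
        osc (z * quadGap t q) := by
  have h : ∀ w : ℂ, ((‖w‖ ^ 4 : ℝ) : ℂ) = w * (w * (starRingEnd ℂ w * starRingEnd ℂ w)) := by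
    intro w
    have := Complex.mul_conj' w
    push_cast
    linear_combination (-(‖w‖ : ℂ) ^ 2 - w * starRingEnd ℂ w) * this
  rw [h, quads, Finset.sum_product]
  simp_rw [Finset.sum_product, map_sum, Finset.sum_mul_sum, Finset.mul_sum]
  refine Finset.sum_congr rfl fun n₁ _ => ?_
  refine Finset.sum_congr rfl fun n₂ _ => ?_
  refine Finset.sum_congr rfl fun n₃ _ => ?_
  refine Finset.sum_congr rfl fun n₄ _ => ?_
  have e : z * quadGap t (n₁, n₂, n₃, n₄) = z * t n₁ + z * t n₂ + -(z * t n₃) + -(z * t n₄) := by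
    simp only [quadGap]; ring
  rw [e, osc_add, osc_add, osc_add, map_mul, map_mul, conj_osc, conj_osc]
  ring

lemma integral_exp_neg_sq_mul_osc (x : ℝ) :
    ∫ z : ℝ, ((exp (-z ^ 2) : ℝ) : ℂ) * osc (z * x) = ((√π * exp (-x ^ 2 / 4) : ℝ) : ℂ) := by
  have h := fourierIntegral_gaussian (b := 1) (by simp) (x : ℂ)
  rw [div_one, mul_one] at h
  have e : (π : ℂ) ^ (1 / 2 : ℂ) = ((√π : ℝ) : ℂ) := by
    rw [sqrt_eq_rpow, Complex.ofReal_cpow pi_pos.le]; norm_num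
  rw [e] at h
  push_cast
  rw [← h]
  refine MeasureTheory.integral_congr_ae (Filter.Eventually.of_forall fun z => ?_)
  simp only [osc]
  push_cast
  rw [mul_comm]
  ring_nf

/-- Gaussian majorant for the fourth moment. -/
lemma integral_norm_sum_pow_four_le (A : Finset ℕ) {b : ℕ → ℂ} (t : ℕ → ℝ) {B : ℝ}
    (hb : ∀ m ∈ A, ‖b m‖ ≤ B) :
    ∫ z in (1 : ℝ)..2, ‖∑ m ∈ A, b m * osc (z * t m)‖ ^ 4 ≤
      exp 4 * √π * B ^ 4 * ∑ q ∈ quads A, exp (-quadGap t q ^ 2 / 4) := by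
  set F : ℝ → ℝ := fun z => ‖∑ m ∈ A, b m * osc (z * t m)‖ ^ 4 with hF
  have hFc : Continuous F := by fun_prop
  have hgi : MeasureTheory.Integrable fun z : ℝ => exp (-z ^ 2) := by
    simpa using integrable_exp_neg_mul_sq one_pos
  have hFb : ∀ z, ‖F z‖ ≤ (∑ m ∈ A, ‖b m‖) ^ 4 := by
    intro z
    simp only [hF]
    rw [Real.norm_of_nonneg (by positivity)]
    refine pow_le_pow_left₀ (norm_nonneg _) ?_ 4
    refine norm_sum_le_of_le _ fun m _ => ?_
    rw [norm_mul, norm_osc, mul_one]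
  have hi : MeasureTheory.Integrable fun z : ℝ => F z * exp (-z ^ 2) :=
    hgi.bdd_mul hFc.aestronglyMeasurable (Filter.Eventually.of_forall hFb)
  have h1 : ∫ z in (1 : ℝ)..2, F z ≤ exp 4 * ∫ z : ℝ, F z * exp (-z ^ 2) := by
    calc ∫ z in (1 : ℝ)..2, F z ≤ ∫ z in (1 : ℝ)..2, exp 4 * (F z * exp (-z ^ 2)) := by
          refine intervalIntegral.integral_mono_on one_le_two (hFc.intervalIntegrable _ _)
            (Continuous.intervalIntegrable (by fun_prop) _ _) fun z hz => ?_
          have e : exp 4 * (F z * exp (-z ^ 2)) = F z * exp (4 - z ^ 2) := by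
            rw [sub_eq_add_neg, exp_add]; ring
          rw [e]
          refine le_mul_of_one_le_right (by positivity) (one_le_exp ?_)
          nlinarith [hz.1, hz.2]
      _ = exp 4 * ∫ z in (1 : ℝ)..2, F z * exp (-z ^ 2) := intervalIntegral.integral_const_mul _ _
      _ ≤ _ := by
          rw [intervalIntegral.integral_of_le one_le_two]
          refine mul_le_mul_of_nonneg_left (MeasureTheory.setIntegral_le_integral hi
            (Filter.Eventually.of_forall fun z => ?_)) (exp_pos _).le
          simp only [Pi.zero_apply, hF]
          positivity
  have h2 : ((∫ z : ℝ, F z * exp (-z ^ 2) : ℝ) : ℂ) = ∑ q ∈ quads A,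
      b q.1 * b q.2.1 * (starRingEnd ℂ (b q.2.2.1) * starRingEnd ℂ (b q.2.2.2)) *
        ((√π * exp (-quadGap t q ^ 2 / 4) : ℝ) : ℂ) := by
    rw [← integral_complex_ofReal]
    simp_rw [← integral_exp_neg_sq_mul_osc, ← MeasureTheory.integral_const_mul]
    rw [← MeasureTheory.integral_finsetSum]
    · refine MeasureTheory.integral_congr_ae (Filter.Eventually.of_forall fun z => ?_)
      simp only [hF]
      rw [Complex.ofReal_mul, norm_sum_mul_osc_pow_four, Finset.sum_mul]
      exact Finset.sum_congr rfl fun q _ => by ring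
    · intro q _
      refine MeasureTheory.Integrable.const_mul ?_ _
      simp_rw [mul_comm _ (osc _)]
      refine MeasureTheory.Integrable.bdd_mul (c := 1) hgi.ofReal
        (Continuous.aestronglyMeasurable (by fun_prop))
        (Filter.Eventually.of_forall fun z => (norm_osc _).le)
  have h3 : ∫ z : ℝ, F z * exp (-z ^ 2) ≤
      √π * B ^ 4 * ∑ q ∈ quads A, exp (-quadGap t q ^ 2 / 4) := by
    have h4 : ∫ z : ℝ, F z * exp (-z ^ 2) ≤ ‖((∫ z : ℝ, F z * exp (-z ^ 2) : ℝ) : ℂ)‖ := by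
      rw [Complex.norm_real]; exact le_abs_self _
    refine h4.trans ?_
    rw [h2, Finset.mul_sum]
    refine norm_sum_le_of_le _ fun q hq => ?_
    obtain ⟨q1, q2, q3, q4⟩ := mem_quads.1 hq
    rw [norm_mul, norm_mul, norm_mul, norm_mul, RCLike.norm_conj, RCLike.norm_conj,
      Complex.norm_real, Real.norm_of_nonneg (by positivity)]
    have hB : 0 ≤ B := (norm_nonneg _).trans (hb _ q1)
    calc _ ≤ B * B * (B * B) * (√π * exp (-quadGap t q ^ 2 / 4)) := by
          gcongr
          · exact hb _ q1
          · exact hb _ q2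
          · exact hb _ q3
          · exact hb _ q4
      _ = _ := by ring
  calc ∫ z in (1 : ℝ)..2, F z ≤ exp 4 * ∫ z : ℝ, F z * exp (-z ^ 2) := h1
    _ ≤ exp 4 * (√π * B ^ 4 * ∑ q ∈ quads A, exp (-quadGap t q ^ 2 / 4)) := by gcongr
    _ = _ := by ring

/-- A Gaussian sum is controlled by counting functions of linear growth. -/
lemma exists_sum_exp_neg_sq_le : ∃ C : ℝ, 0 ≤ C ∧ ∀ {ι : Type} (Q : Finset ι) (x : ι → ℝ) (P : ℝ),
    (∀ j : ℕ, ((Q.filter fun q => |x q| < j + 1).card : ℝ) ≤ P * (j + 1)) →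
    ∑ q ∈ Q, exp (-x q ^ 2 / 4) ≤ C * P := by
  have hs : Summable fun j : ℕ => 1 / ((j : ℝ) + 1) ^ 2 := by
    have := (summable_nat_add_iff 1).2 ((Real.summable_one_div_nat_pow (p := 2)).2 one_lt_two)
    simpa using this
  have hs3 : Summable fun j : ℕ => 1 / ((j : ℝ) + 1) ^ 3 := by
    have := (summable_nat_add_iff 1).2 ((Real.summable_one_div_nat_pow (p := 3)).2 (by norm_num))
    simpa using this
  refine ⟨100 * ∑' j : ℕ, 1 / ((j : ℝ) + 1) ^ 2,
    mul_nonneg (by norm_num) (tsum_nonneg fun j => by positivity), fun {ι} Q x P hP => ?_⟩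
  have hpt : ∀ y : ℝ, exp (-y ^ 2 / 4) ≤ 100 * (1 / (|y| + 1) ^ 3) := by
    intro y
    rw [neg_div, exp_neg, ← div_eq_mul_one_div, inv_le_comm₀ (exp_pos _) (by positivity), inv_div]
    have h1 := quadratic_le_exp_of_nonneg (by positivity : 0 ≤ y ^ 2 / 4)
    refine le_trans ?_ h1
    rw [div_le_iff₀ (by norm_num), ← sq_abs y]
    have := abs_nonneg y
    nlinarith [sq_nonneg (|y| ^ 2 - |y|), sq_nonneg (|y| - 1), sq_nonneg (|y| ^ 2 - 1),
      pow_nonneg this 3]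
  set f : ι → ℕ → ℝ := fun q j => if |x q| < j + 1 then 1 / ((j : ℝ) + 1) ^ 3 else 0 with hf
  have hf0 : ∀ q j, 0 ≤ f q j := by
    intro q j; simp only [hf]; split_ifs <;> positivity
  have hfs : ∀ q, Summable (f q) := fun q => Summable.of_nonneg_of_le (hf0 q) (fun j => by
    simp only [hf]; split_ifs <;> first | exact le_rfl | positivity) hs3
  have hq : ∀ q, exp (-x q ^ 2 / 4) ≤ 100 * ∑' j, f q j := by
    intro q
    refine (hpt _).trans (mul_le_mul_of_nonneg_left ?_ (by norm_num))
    refine le_trans ?_ ((hfs q).le_tsum ⌊|x q|⌋₊ fun j _ => hf0 q j)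
    simp only [hf]
    rw [if_pos (Nat.lt_floor_add_one _)]
    have := Nat.floor_le (abs_nonneg (x q))
    gcongr
  calc ∑ q ∈ Q, exp (-x q ^ 2 / 4) ≤ ∑ q ∈ Q, 100 * ∑' j, f q j := Finset.sum_le_sum fun q _ => hq q
    _ = 100 * ∑' j, ∑ q ∈ Q, f q j := by
        rw [Summable.tsum_finsetSum fun q _ => hfs q, Finset.mul_sum]
    _ ≤ 100 * ∑' j : ℕ, P * (1 / ((j : ℝ) + 1) ^ 2) := by
        refine mul_le_mul_of_nonneg_left ?_ (by norm_num)
        refine Summable.tsum_le_tsum (fun j => ?_) (summable_sum fun q _ => hfs q) (hs.mul_left _)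
        simp only [hf]
        rw [← Finset.sum_filter, Finset.sum_const, nsmul_eq_mul]
        calc _ ≤ P * (j + 1) * (1 / ((j : ℝ) + 1) ^ 3) := by gcongr; exact hP j
          _ = _ := by field_simp
    _ = _ := by rw [tsum_mul_left]; ring

lemma pow_four_intervalIntegral_le {f : ℝ → ℝ} (hf : Continuous f) :
    (∫ z in (1 : ℝ)..2, f z) ^ 4 ≤ ∫ z in (1 : ℝ)..2, f z ^ 4 := by
  set c := ∫ z in (1 : ℝ)..2, f z with hc
  have h : ∫ z in (1 : ℝ)..2, (4 * c ^ 3 * f z - 3 * c ^ 4) ≤ ∫ z in (1 : ℝ)..2, f z ^ 4 := by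
    refine intervalIntegral.integral_mono_on one_le_two
      (Continuous.intervalIntegrable (by fun_prop) _ _)
      (Continuous.intervalIntegrable (by fun_prop) _ _) fun z _ => ?_
    nlinarith [mul_nonneg (sq_nonneg (f z - c))
      (add_nonneg (sq_nonneg (f z + c)) (mul_nonneg zero_le_two (sq_nonneg c)))]
  rw [intervalIntegral.integral_sub (Continuous.intervalIntegrable (by fun_prop) _ _)
    (by simp), intervalIntegral.integral_const_mul, ← hc] at h
  simp only [intervalIntegral.integral_const, smul_eq_mul] at h
  nlinarith

lemma intervalIntegral_swap {f : ℝ → ℝ → ℝ} (hf : Continuous (Function.uncurry f)) (a b c d : ℝ)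
    (hab : a ≤ b) (hcd : c ≤ d) :
    ∫ x in a..b, ∫ y in c..d, f x y = ∫ y in c..d, ∫ x in a..b, f x y := by
  simp only [intervalIntegral.integral_of_le hab, intervalIntegral.integral_of_le hcd]
  refine MeasureTheory.integral_integral_swap ?_
  rw [MeasureTheory.Measure.prod_restrict]
  exact (hf.continuousOn.integrableOn_compact (isCompact_Icc.prod isCompact_Icc)).mono_set
    (Set.prod_mono Set.Ioc_subset_Icc_self Set.Ioc_subset_Icc_self)

/-- Removal of slowly varying amplitudes from a fourth moment. -/
lemma integral_norm_sum_amplitude_pow_four_le (A : Finset ℕ) (t : ℕ → ℝ) {B R : ℝ}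
    (hR : ∀ b : ℕ → ℂ, (∀ m ∈ A, ‖b m‖ ≤ B) →
      ∫ z in (1 : ℝ)..2, ‖∑ m ∈ A, b m * osc (z * t m)‖ ^ 4 ≤ R)
    {u u' : ℕ → ℝ → ℂ} (hu : ∀ m z, u m z = u m 1 + ∫ ζ in (1 : ℝ)..z, u' m ζ)
    (hu' : ∀ m, Continuous (u' m)) (hB : ∀ m ∈ A, ‖u m 1‖ ≤ B)
    (hB' : ∀ m ∈ A, ∀ ζ ∈ Set.Icc (1 : ℝ) 2, ‖u' m ζ‖ ≤ B) :
    ∫ z in (1 : ℝ)..2, ‖∑ m ∈ A, u m z * osc (z * t m)‖ ^ 4 ≤ 16 * R := by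
  have huc : ∀ m, Continuous (u m) := by
    intro m
    rw [show u m = fun z => u m 1 + ∫ ζ in (1 : ℝ)..z, u' m ζ from funext (hu m)]
    exact continuous_const.add
      (intervalIntegral.continuous_primitive (fun _ _ => (hu' m).intervalIntegrable _ _) _)
  set G : ℝ → ℝ → ℝ := fun z ζ => ‖∑ m ∈ A, u' m ζ * osc (z * t m)‖ with hG
  have hGc : Continuous (Function.uncurry G) := by
    simp only [hG, Function.uncurry_def]
    fun_prop
  set G₀ : ℝ → ℝ := fun z => ‖∑ m ∈ A, u m 1 * osc (z * t m)‖ with hG₀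
  have hG4 : Continuous (Function.uncurry fun z ζ => G z ζ ^ 4) := hGc.pow 4
  have hJ : Continuous fun z => ∫ ζ in (1 : ℝ)..2, G z ζ ^ 4 :=
    intervalIntegral.continuous_parametric_intervalIntegral_of_continuous' hG4 _ _
  have hpt : ∀ z ∈ Set.Icc (1 : ℝ) 2, ‖∑ m ∈ A, u m z * osc (z * t m)‖ ^ 4 ≤
      8 * (G₀ z ^ 4 + ∫ ζ in (1 : ℝ)..2, G z ζ ^ 4) := by
    intro z hz
    have hGz : Continuous (G z) := by simp only [hG]; fun_prop
    have h1 : ∑ m ∈ A, u m z * osc (z * t m) = ∑ m ∈ A, u m 1 * osc (z * t m) +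
        ∫ ζ in (1 : ℝ)..z, ∑ m ∈ A, u' m ζ * osc (z * t m) := by
      rw [intervalIntegral.integral_finsetSum
        (fun m _ => Continuous.intervalIntegrable (by fun_prop) _ _), ← Finset.sum_add_distrib]
      refine Finset.sum_congr rfl fun m _ => ?_
      rw [hu m z, intervalIntegral.integral_mul_const]
      ring
    have h2 : ‖∫ ζ in (1 : ℝ)..z, ∑ m ∈ A, u' m ζ * osc (z * t m)‖ ≤
        ∫ ζ in (1 : ℝ)..2, G z ζ := by
      refine (intervalIntegral.norm_integral_le_integral_norm hz.1).trans ?_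
      exact intervalIntegral.integral_mono_interval le_rfl hz.1 hz.2
        (Filter.Eventually.of_forall fun ζ => norm_nonneg _) (hGz.intervalIntegrable _ _)
    have h3 : ‖∑ m ∈ A, u m z * osc (z * t m)‖ ≤ G₀ z + ∫ ζ in (1 : ℝ)..2, G z ζ := by
      rw [h1]
      exact (norm_add_le _ _).trans (add_le_add le_rfl h2)
    have h4 : 0 ≤ ∫ ζ in (1 : ℝ)..2, G z ζ := (norm_nonneg _).trans h2
    calc _ ≤ (G₀ z + ∫ ζ in (1 : ℝ)..2, G z ζ) ^ 4 := by gcongr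
      _ ≤ 2 ^ (4 - 1) * (G₀ z ^ 4 + (∫ ζ in (1 : ℝ)..2, G z ζ) ^ 4) :=
          add_pow_le (norm_nonneg _) h4 4
      _ ≤ 8 * (G₀ z ^ 4 + ∫ ζ in (1 : ℝ)..2, G z ζ ^ 4) := by
          norm_num
          exact pow_four_intervalIntegral_le hGz
  have hG₀c : Continuous G₀ := by simp only [hG₀]; fun_prop
  calc _ ≤ ∫ z in (1 : ℝ)..2, 8 * (G₀ z ^ 4 + ∫ ζ in (1 : ℝ)..2, G z ζ ^ 4) :=
        intervalIntegral.integral_mono_on one_le_two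
          (Continuous.intervalIntegrable (by fun_prop) _ _)
          (Continuous.intervalIntegrable (by fun_prop) _ _) hpt
    _ = 8 * ((∫ z in (1 : ℝ)..2, G₀ z ^ 4) + ∫ ζ in (1 : ℝ)..2, ∫ z in (1 : ℝ)..2, G z ζ ^ 4) := by
        rw [intervalIntegral.integral_const_mul, intervalIntegral.integral_add
          (Continuous.intervalIntegrable (by fun_prop) _ _) (hJ.intervalIntegrable _ _),
          intervalIntegral_swap hG4 _ _ _ _ one_le_two one_le_two]
    _ ≤ 8 * (R + ∫ ζ in (1 : ℝ)..2, R) := by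
        gcongr
        · exact hR _ hB
        · refine intervalIntegral.integral_mono_on one_le_two ?_ (by simp) fun ζ hζ =>
            hR (fun m => u' m ζ) fun m hm => hB' m hm ζ hζ
          refine Continuous.intervalIntegrable ?_ _ _
          exact intervalIntegral.continuous_parametric_intervalIntegral_of_continuous'
            (f := fun ζ z => G z ζ ^ 4) (hG4.comp continuous_swap) _ _
    _ = 16 * R := by
        rw [intervalIntegral.integral_const, smul_eq_mul]; ring

/-- The number of quadruples in `[a N, b N]` whose normalised `α`-powers have gap below `δ`. -/
noncomputable def quadCount (α a b N δ : ℝ) : ℕ :=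
  ((quads (Finset.Icc ⌈a * N⌉₊ ⌊b * N⌋₊)).filter
    fun q => |quadGap (fun n => ((n : ℝ) / N) ^ α) q| < δ).card

/-- The counting bound for the exponent `α` with loss `N ^ κ`. -/
def CountBound (α κ : ℝ) : Prop :=
  ∀ a b : ℝ, 0 < a → a < b → ∃ C : ℝ, 0 < C ∧ ∀ N δ : ℝ, 0 < N → 0 < δ →
    (quadCount α a b N δ : ℝ) ≤ C * N ^ κ * (N ^ 4 * δ + N ^ 2)

lemma dualInt_eq_osc_mul_statAmp {α : ℝ} (hα1 : α < 1) (ω : ℝ → ℝ) (s₀ s₁ Y z : ℝ) {ν : ℝ}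
    (hν : 0 < ν) :
    dualInt ω α s₀ s₁ Y ν z =
      statAmp ω α s₀ s₁ Y (-log ν / (1 - α)) z *
        osc (z * (Y * ((1 - α) * ν ^ (α / (α - 1))))) := by
  have hγ : 1 - α ≠ 0 := by linarith
  have hγ' : α - 1 ≠ 0 := by linarith
  set σ := -log ν / (1 - α) with hσ
  have hνσ : ν = exp (-(1 - α) * σ) := by
    rw [hσ, show -(1 - α) * (-log ν / (1 - α)) = log ν by field_simp, exp_log hν]
  have e1 : ν ^ (α / (α - 1)) = exp (α * σ) := by
    rw [rpow_def_of_pos hν, hσ]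
    congr 1
    field_simp
    ring
  rw [dualInt, statAmp, e1, ← intervalIntegral.integral_mul_const]
  refine intervalIntegral.integral_congr fun s _ => ?_
  have e2 : Y * z * (exp (α * s) - α * ν * exp s) =
      Y * z * exp (α * σ) * modelPhase α (s - σ) + z * (Y * ((1 - α) * exp (α * σ))) := by
    have h1 : exp (α * s) = exp (α * σ) * exp (α * (s - σ)) := by rw [← exp_add]; ring_nf
    have h2 : ν * exp s = exp (α * σ) * exp (s - σ) := by
      rw [hνσ, ← exp_add, ← exp_add]; ring_nf
    rw [modelPhase, h1]
    linear_combination (-Y * z * α) * h2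
  rw [e2, osc_add]
  ring

lemma exists_dual_fourth_moment {β κ a b θ : ℝ} (h : CountBound β κ) (ha : 0 < a) (hab : a < b)
    (hθ : 0 < θ) :
    ∃ C : ℝ, 0 ≤ C ∧ ∀ Y M B : ℝ, 0 < Y → 0 < M → ∀ c : ℕ → ℂ,
      (∀ m ∈ Finset.Icc ⌈a * M⌉₊ ⌊b * M⌋₊, ‖c m‖ ≤ B) →
      ∫ z in (1 : ℝ)..2, ‖∑ m ∈ Finset.Icc ⌈a * M⌉₊ ⌊b * M⌋₊,
        c m * osc (z * (Y * (θ * ((m : ℝ) / M) ^ β)))‖ ^ 4 ≤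
      C * (B ^ 4 * (M ^ κ * (M ^ 4 / Y + M ^ 2))) := by
  obtain ⟨C₁, hC₁, hcount⟩ := h a b ha hab
  obtain ⟨C₂, hC₂, hgauss⟩ := exists_sum_exp_neg_sq_le
  refine ⟨exp 4 * √π * (C₂ * (C₁ * (1 / θ + 1))), by positivity, fun Y M B hY hM c hc => ?_⟩
  refine (integral_norm_sum_pow_four_le _ _ hc).trans ?_
  have hg : ∑ q ∈ quads (Finset.Icc ⌈a * M⌉₊ ⌊b * M⌋₊),
      exp (-quadGap (fun m => Y * (θ * ((m : ℝ) / M) ^ β)) q ^ 2 / 4) ≤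
      C₂ * (C₁ * M ^ κ * (M ^ 4 * (1 / (Y * θ)) + M ^ 2)) := by
    refine hgauss _ _ _ fun j => ?_
    have hj := hcount M ((j + 1) / (Y * θ)) hM (by positivity)
    have hset : ((quads (Finset.Icc ⌈a * M⌉₊ ⌊b * M⌋₊)).filter fun q =>
        |quadGap (fun m => Y * (θ * ((m : ℝ) / M) ^ β)) q| < j + 1).card =
        quadCount β a b M ((j + 1) / (Y * θ)) := by
      rw [quadCount]
      congr 1
      refine Finset.filter_congr fun q _ => ?_
      have e : quadGap (fun m => Y * (θ * ((m : ℝ) / M) ^ β)) q =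
          Y * θ * quadGap (fun m => ((m : ℝ) / M) ^ β) q := by
        simp only [quadGap]; ring
      rw [e, abs_mul, abs_of_pos (by positivity), lt_div_iff₀' (by positivity)]
    rw [hset]
    refine hj.trans ?_
    have hMk : 0 < M ^ κ := rpow_pos_of_pos hM κ
    rw [mul_assoc (C₁ * M ^ κ) _ ((j : ℝ) + 1)]
    refine mul_le_mul_of_nonneg_left ?_ (by positivity)
    have h2 : M ^ 2 * 1 ≤ M ^ 2 * ((j : ℝ) + 1) := by gcongr; linarith [Nat.cast_nonneg (α := ℝ) j]
    have h3 : M ^ 4 * ((j + 1) / (Y * θ)) = M ^ 4 * (1 / (Y * θ)) * (j + 1) := by ring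
    rw [h3]
    linarith
  have hMk : 0 < M ^ κ := rpow_pos_of_pos hM κ
  have hg2 : M ^ 4 * (1 / (Y * θ)) + M ^ 2 ≤ (1 / θ + 1) * (M ^ 4 / Y + M ^ 2) := by
    have e : (1 / θ + 1) * (M ^ 4 / Y + M ^ 2) =
        M ^ 4 * (1 / (Y * θ)) + M ^ 2 + (M ^ 4 / Y + 1 / θ * M ^ 2) := by
      field_simp; ring
    rw [e]
    have : 0 ≤ M ^ 4 / Y + 1 / θ * M ^ 2 := by positivity
    linarith
  have hB4 : 0 ≤ B ^ 4 := by positivity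
  calc _ ≤ exp 4 * √π * B ^ 4 *
        (C₂ * (C₁ * M ^ κ * ((1 / θ + 1) * (M ^ 4 / Y + M ^ 2)))) := by
        gcongr
        exact hg.trans (by gcongr)
    _ = _ := by ring

lemma continuous_smoothSum (ω : ℝ → ℝ) (α b N : ℝ) : Continuous (smoothSum ω α b N) := by
  unfold smoothSum
  fun_prop

/-- Fourth moment of the smoothed sum over a dyadic range, in terms of the dual counting bound. -/
lemma exists_fourth_moment_bound {ω : ℝ → ℝ} (hω : ContDiff ℝ 3 ω) {α a₀ b₀ κ : ℝ}
    (hα0 : α ≠ 0) (hα1 : α < 1) (ha₀ : 0 < a₀) (hab : a₀ < b₀) (hl : ∀ x ≤ a₀, ω x = 0)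
    (hr : ∀ x ≥ b₀, ω x = 0) (hH : CountBound (α / (α - 1)) κ) :
    ∃ C : ℝ, 0 ≤ C ∧ ∀ N Y M : ℝ, 0 < N → 0 < Y → M = Y / (2 * π * N) →
      ∫ z in (1 : ℝ)..2, ‖smoothSum ω α b₀ N (Y * z ^ (1 - α))‖ ^ 4 ≤
        C * (N ^ 4 / Y ^ 2 * (M ^ κ * (M ^ 4 / Y + M ^ 2)) + (N / Y ^ 2 + 1 / N) ^ 4) := by
  have hb₀ : 0 < b₀ := ha₀.trans hab
  set s₀ := log (a₀ / 4) with hs₀d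
  set s₁ := log (2 * b₀) with hs₁d
  have hs₀ : 2 * exp s₀ < a₀ := by rw [hs₀d, exp_log (by positivity)]; linarith
  have hs₁ : b₀ < exp s₁ := by rw [hs₁d, exp_log (by positivity)]; linarith
  have hs : s₀ ≤ s₁ := by
    rw [← exp_le_exp]; nlinarith [exp_pos s₀]
  have hz₀ : ∀ z ∈ Set.Icc (1 : ℝ) 2, ω =ᶠ[nhds (z * exp s₀)] 0 := fun z hz => by
    have : z * exp s₀ < a₀ := by nlinarith [exp_pos s₀, hz.2]
    filter_upwards [gt_mem_nhds this] with x hx using hl x hx.le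
  have hz₁ : ∀ z ∈ Set.Icc (1 : ℝ) 2, ω =ᶠ[nhds (z * exp s₁)] 0 := fun z hz => by
    have : b₀ < z * exp s₁ := by nlinarith [exp_pos s₁, hz.1]
    filter_upwards [lt_mem_nhds this] with x hx using hr x hx.le
  have hα' : 0 < |α| := abs_pos.2 hα0
  have hγ : 0 < 1 - α := by linarith
  set a := |α| * exp (-(1 - α) * (s₁ + 1)) with ha
  set b := |α| * exp (-(1 - α) * (s₀ - 1)) with hb
  have ha0 : 0 < a := by positivity
  have hab' : a < b := by
    rw [ha, hb]
    refine mul_lt_mul_of_pos_left (exp_lt_exp.2 ?_) hα'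
    nlinarith
  set β := α / (α - 1) with hβ
  set θ := (1 - α) * |α| ^ (-β) with hθ
  have hθ0 : 0 < θ := by positivity
  obtain ⟨C₁, hC₁, happ⟩ := exists_smoothSum_approx hω hα0 hα1 ha₀ hab hl hr hs₀ hs₁
  obtain ⟨C₂, hamp⟩ := exists_statAmp_bound hα0 hα1.ne hω hs hz₀ hz₁ (s₀ - 1) (s₁ + 1)
  obtain ⟨C₃, hC₃, hdual⟩ := exists_dual_fourth_moment hH ha0 hab' hθ0
  refine ⟨8 * 16 * 16 * C₃ * C₂ ^ 4 + 8 * C₁ ^ 4, by positivity, fun N Y M hN hY hM => ?_⟩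
  have hM0 : 0 < M := by rw [hM]; positivity
  set A := Finset.Icc ⌈a * M⌉₊ ⌊b * M⌋₊ with hA
  have hmA : ∀ m ∈ A, 0 < (m : ℝ) / (|α| * M) ∧
      -log ((m : ℝ) / (|α| * M)) / (1 - α) ∈ Set.Icc (s₀ - 1) (s₁ + 1) := by
    intro m hm
    obtain ⟨h1, h2⟩ := Finset.mem_Icc.1 hm
    have h1' : a * M ≤ m := Nat.ceil_le.1 h1
    have h2' : (m : ℝ) ≤ b * M := (Nat.le_floor_iff (by positivity)).1 h2
    have h1'' : exp (-(1 - α) * (s₁ + 1)) ≤ (m : ℝ) / (|α| * M) := by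
      rw [le_div_iff₀ (by positivity)]; rw [ha] at h1'; linarith
    have h2'' : (m : ℝ) / (|α| * M) ≤ exp (-(1 - α) * (s₀ - 1)) := by
      rw [div_le_iff₀ (by positivity)]; rw [hb] at h2'; linarith
    have h0 := (exp_pos _).trans_le h1''
    refine ⟨h0, ?_, ?_⟩
    · rw [le_div_iff₀ hγ]
      have := (log_le_iff_le_exp h0).2 h2''
      linarith
    · rw [div_le_iff₀ hγ]
      have := (le_log_iff_exp_le h0).2 h1''
      linarith
  set t : ℕ → ℝ := fun m => Y * (θ * ((m : ℝ) / M) ^ β) with ht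
  set u : ℕ → ℝ → ℂ := fun m z => statAmp ω α s₀ s₁ Y (-log ((m : ℝ) / (|α| * M)) / (1 - α)) z
    with hu
  have hsum : ∀ z, ∑ m ∈ A, dualInt ω α s₀ s₁ Y (m / (|α| * M)) z =
      ∑ m ∈ A, u m z * osc (z * t m) := by
    intro z
    refine Finset.sum_congr rfl fun m hm => ?_
    rw [dualInt_eq_osc_mul_statAmp hα1 _ _ _ _ _ (hmA m hm).1]
    have e : (1 - α) * ((m : ℝ) / (|α| * M)) ^ β = θ * ((m : ℝ) / M) ^ β := by
      rw [show (m : ℝ) / (|α| * M) = |α|⁻¹ * ((m : ℝ) / M) by field_simp,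
        mul_rpow (by positivity) (by positivity), hθ, inv_rpow hα'.le, rpow_neg hα'.le]
      ring
    rw [e]
  have hmain : ∫ z in (1 : ℝ)..2, ‖∑ m ∈ A, u m z * osc (z * t m)‖ ^ 4 ≤
      16 * (C₃ * ((C₂ / √Y) ^ 4 * (M ^ κ * (M ^ 4 / Y + M ^ 2)))) := by
    refine integral_norm_sum_amplitude_pow_four_le A t (B := C₂ / √Y)
      (fun c hc => hdual Y M _ hY hM0 c hc)
      (u' := fun m ζ => statAmpDeriv ω α s₀ s₁ Y (-log ((m : ℝ) / (|α| * M)) / (1 - α)) ζ)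
      (fun m z => statAmp_eq_add_integral hω _ _ _ _ _ _)
      (fun m => continuous_statAmpDeriv hω _ _ _ _ _)
      (fun m hm => (hamp Y hY _ (hmA m hm).2 1 ⟨le_rfl, one_le_two⟩).1)
      (fun m hm ζ hζ => (hamp Y hY _ (hmA m hm).2 ζ hζ).2)
  have huc : ∀ m, Continuous (u m) := fun m =>
    continuous_iff_continuousAt.2 fun z => (hasDerivAt_statAmp hω _ _ _ _ _ z).continuousAt
  set E := C₁ * (N / Y ^ 2 + 1 / N) with hE
  have hE0 : 0 ≤ E := by positivity
  have hpt : ∀ z ∈ Set.Icc (1 : ℝ) 2, ‖smoothSum ω α b₀ N (Y * z ^ (1 - α))‖ ^ 4 ≤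
      8 * (16 * N ^ 4 * ‖∑ m ∈ A, u m z * osc (z * t m)‖ ^ 4 + E ^ 4) := by
    intro z hz
    have h1 := happ N Y M hN hY hM z hz
    rw [hsum z] at h1
    set W := ∑ m ∈ A, u m z * osc (z * t m) with hW
    have h2 : ‖smoothSum ω α b₀ N (Y * z ^ (1 - α))‖ ≤ 2 * N * ‖W‖ + E := by
      have h3 := norm_le_norm_add_norm_sub' (smoothSum ω α b₀ N (Y * z ^ (1 - α))) (N * z * W)
      have h4 : ‖(N : ℂ) * z * W‖ ≤ 2 * N * ‖W‖ := by
        rw [norm_mul, norm_mul, Complex.norm_real, Complex.norm_real, Real.norm_of_nonneg hN.le,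
          Real.norm_of_nonneg (by linarith [hz.1])]
        refine mul_le_mul_of_nonneg_right ?_ (norm_nonneg _)
        nlinarith [hz.2]
      linarith
    calc _ ≤ (2 * N * ‖W‖ + E) ^ 4 := by gcongr
      _ ≤ 2 ^ (4 - 1) * ((2 * N * ‖W‖) ^ 4 + E ^ 4) := add_pow_le (by positivity) hE0 4
      _ = _ := by norm_num; ring
  have hzc : Continuous fun z : ℝ => z ^ (1 - α) :=
    continuous_id.rpow_const fun z => Or.inr hγ.le
  have hSc := continuous_smoothSum ω α b₀ N
  calc _ ≤ ∫ z in (1 : ℝ)..2, 8 * (16 * N ^ 4 * ‖∑ m ∈ A, u m z * osc (z * t m)‖ ^ 4 + E ^ 4) :=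
        intervalIntegral.integral_mono_on one_le_two
          (Continuous.intervalIntegrable (by fun_prop) _ _)
          (Continuous.intervalIntegrable (by fun_prop) _ _) hpt
    _ = 8 * (16 * N ^ 4 * (∫ z in (1 : ℝ)..2, ‖∑ m ∈ A, u m z * osc (z * t m)‖ ^ 4) + E ^ 4) := by
        rw [intervalIntegral.integral_const_mul, intervalIntegral.integral_add
          (Continuous.intervalIntegrable (by fun_prop) _ _) (by simp),
          intervalIntegral.integral_const_mul, intervalIntegral.integral_const, smul_eq_mul]
        ring
    _ ≤ 8 * (16 * N ^ 4 * (16 * (C₃ * ((C₂ / √Y) ^ 4 * (M ^ κ * (M ^ 4 / Y + M ^ 2))))) + E ^ 4) := by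
        gcongr
    _ = 8 * 16 * 16 * C₃ * C₂ ^ 4 * (N ^ 4 / Y ^ 2 * (M ^ κ * (M ^ 4 / Y + M ^ 2))) +
        8 * C₁ ^ 4 * (N / Y ^ 2 + 1 / N) ^ 4 := by
        have e : (√Y) ^ 4 = Y ^ 2 := by
          rw [show (√Y) ^ 4 = (√Y ^ 2) ^ 2 by ring, sq_sqrt hY.le]
        rw [div_pow, e, hE]
        ring
    _ ≤ _ := by
        have h1 : 0 ≤ N ^ 4 / Y ^ 2 * (M ^ κ * (M ^ 4 / Y + M ^ 2)) := by positivity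
        have h2 : 0 ≤ (N / Y ^ 2 + 1 / N) ^ 4 := by positivity
        have h3 : 0 ≤ 8 * 16 * 16 * C₃ * C₂ ^ 4 := by positivity
        have h4 : 0 ≤ 8 * C₁ ^ 4 := by positivity
        nlinarith [mul_nonneg h3 h2, mul_nonneg h4 h1]

lemma integral_scale_rpow_le {g : ℝ → ℝ} (hg : Continuous g) (hg0 : ∀ y, 0 ≤ g y) {γ Y : ℝ}
    (hγ : 0 < γ) (hY : 0 < Y) :
    ∫ y in Y..Y * 2 ^ γ, g y ≤ γ * 2 ^ γ * Y * ∫ z in (1 : ℝ)..2, g (Y * z ^ γ) := by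
  have hc : Continuous fun z : ℝ => z ^ γ := continuous_id.rpow_const fun z => Or.inr hγ.le
  have hIcc : Set.uIcc (1 : ℝ) 2 = Set.Icc 1 2 := Set.uIcc_of_le one_le_two
  have hc' : ContinuousOn (fun z : ℝ => Y * (γ * z ^ (γ - 1))) (Set.Icc 1 2) := by
    refine continuousOn_const.mul (continuousOn_const.mul
      (ContinuousOn.rpow_const continuousOn_id fun z hz => Or.inl ?_))
    exact (lt_of_lt_of_le one_pos hz.1).ne'
  have h := intervalIntegral.integral_deriv_smul_comp (a := 1) (b := 2)
    (f := fun z => Y * z ^ γ) (f' := fun z => Y * (γ * z ^ (γ - 1))) (g := g)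
    (fun z hz => by
      rw [hIcc] at hz
      exact (hasDerivAt_rpow_const (Or.inl (lt_of_lt_of_le one_pos hz.1).ne')).const_mul Y)
    (by rw [hIcc]; exact hc') hg
  rw [one_rpow, mul_one] at h
  rw [← h, ← intervalIntegral.integral_const_mul]
  refine intervalIntegral.integral_mono_on one_le_two
    (ContinuousOn.intervalIntegrable (by
      rw [hIcc]; exact hc'.smul (Continuous.continuousOn (by fun_prop))))
    (Continuous.intervalIntegrable (by fun_prop) _ _) fun z hz => ?_
  have hz0 : 0 < z := lt_of_lt_of_le one_pos hz.1
  simp only [Function.comp, smul_eq_mul]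
  refine mul_le_mul_of_nonneg_right ?_ (hg0 _)
  have : z ^ (γ - 1) ≤ 2 ^ γ := by
    rw [rpow_sub_one hz0.ne']
    calc z ^ γ / z ≤ z ^ γ := div_le_self (rpow_nonneg hz0.le _) hz.1
      _ ≤ 2 ^ γ := rpow_le_rpow hz0.le hz.2 hγ.le
  calc Y * (γ * z ^ (γ - 1)) ≤ Y * (γ * 2 ^ γ) := by gcongr
    _ = _ := by ring

lemma norm_smoothSum_le {ω : ℝ → ℝ} (hω1 : ∀ x, |ω x| ≤ 1) (α : ℝ) {b N : ℝ} (hb : 0 < b)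
    (hN : 1 ≤ N) (y : ℝ) : ‖smoothSum ω α b N y‖ ≤ (b + 1) * N := by
  have h : ‖smoothSum ω α b N y‖ ≤ ∑ n ∈ Finset.range (⌊b * N⌋₊ + 1), (1 : ℝ) := by
    refine norm_sum_le_of_le _ fun n _ => ?_
    rw [norm_mul, norm_osc, mul_one, Complex.norm_real]
    exact hω1 _
  refine h.trans ?_
  simp only [Finset.sum_const, Finset.card_range, nsmul_eq_mul, mul_one]
  have := Nat.floor_le (by positivity : 0 ≤ b * N)
  push_cast
  nlinarith

lemma geom_block_sum_le {ρ T : ℝ} (hρ : 1 < ρ) {n : ℕ} (hn : ρ ^ n ≤ T) :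
    ∑ j ∈ Finset.range (n + 1), ρ ^ j ≤ ρ / (ρ - 1) * T ∧
      ∑ j ∈ Finset.range (n + 1), 1 / ρ ^ j ≤ ρ / (ρ - 1) := by
  have h1 : 0 < ρ - 1 := by linarith
  have h0 : 0 < ρ := by linarith
  constructor
  · rw [geom_sum_eq hρ.ne', div_mul_eq_mul_div]
    gcongr
    rw [pow_succ]
    nlinarith
  · have e : ∀ j : ℕ, 1 / ρ ^ j = (1 / ρ) ^ j := fun j => by rw [one_div_pow]
    simp_rw [e]
    have hr : 1 / ρ < 1 := by rw [div_lt_one h0]; exact hρ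
    rw [geom_sum_eq hr.ne]
    have e2 : ((1 / ρ) ^ (n + 1) - 1) / (1 / ρ - 1) = (1 - (1 / ρ) ^ (n + 1)) * (ρ / (ρ - 1)) := by
      have : 1 - ρ ≠ 0 := by linarith
      have : 1 / ρ - 1 ≠ 0 := by linarith
      field_simp
      ring
    rw [e2]
    refine mul_le_of_le_one_left (by positivity) ?_
    have : 0 < (1 / ρ) ^ (n + 1) := by positivity
    linarith

/-- Fourth moment of the smoothed sum over `[0, T]`. -/
lemma exists_integral_smoothSum_pow_four_le {ω : ℝ → ℝ} (hω : ContDiff ℝ 3 ω)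
    (hω1 : ∀ x, |ω x| ≤ 1) {α a₀ b₀ κ : ℝ}
    (hα0 : α ≠ 0) (hα1 : α < 1) (ha₀ : 0 < a₀) (hab : a₀ < b₀) (hl : ∀ x ≤ a₀, ω x = 0)
    (hr : ∀ x ≥ b₀, ω x = 0) (hκ : 0 ≤ κ) (hH : CountBound (α / (α - 1)) κ) :
    ∃ C : ℝ, 0 ≤ C ∧ ∀ N T : ℝ, 1 ≤ N → 1 ≤ T → T ≤ N ^ 2 →
      ∫ y in (0 : ℝ)..T, ‖smoothSum ω α b₀ N y‖ ^ 4 ≤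
        C * (N ^ 4 + N ^ 2 * T * (T / N) ^ κ) := by
  have hb₀ : 0 < b₀ := ha₀.trans hab
  have hγ : 0 < 1 - α := by linarith
  obtain ⟨C, hC, hblock⟩ := exists_fourth_moment_bound hω hα0 hα1 ha₀ hab hl hr hH
  set ρ : ℝ := 2 ^ (1 - α) with hρd
  have hρ : 1 < ρ := one_lt_rpow one_lt_two hγ
  set D := (1 - α) * 2 ^ (1 - α) * C * 16 with hD
  have hD0 : 0 ≤ D := by positivity
  have hρ1 : 0 < ρ - 1 := by linarith
  set R := ρ / (ρ - 1) with hR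
  have hR0 : 0 ≤ R := by positivity
  refine ⟨(b₀ + 1) ^ 4 + D * R, by positivity, fun N T hN hT hTN => ?_⟩
  have hN0 : 0 < N := by linarith
  have hT0 : 0 < T := by linarith
  set g : ℝ → ℝ := fun y => ‖smoothSum ω α b₀ N y‖ ^ 4 with hg
  have hSc := continuous_smoothSum ω α b₀ N
  have hgc : Continuous g := by fun_prop
  have hg0 : ∀ y, 0 ≤ g y := fun y => by positivity
  obtain ⟨n, hn1, hn2⟩ := exists_nat_pow_near hT hρ
  have hstep : ∀ j ∈ Finset.range (n + 1), ∫ y in ρ ^ j..ρ ^ (j + 1), g y ≤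
      D * (N ^ 2 * (T / N) ^ κ * ρ ^ j + N ^ 4 * (1 / ρ ^ j)) := by
    intro j hj
    have hjn : j ≤ n := Nat.lt_succ_iff.1 (Finset.mem_range.1 hj)
    have hY1 : 1 ≤ ρ ^ j := one_le_pow₀ hρ.le
    have hYT : ρ ^ j ≤ T := (pow_le_pow_right₀ hρ.le hjn).trans hn1
    rw [pow_succ]
    set Y := ρ ^ j with hY
    have hY0 : 0 < Y := by linarith
    have h1 := integral_scale_rpow_le hgc hg0 hγ hY0
    have h2 := hblock N Y _ hN0 hY0 rfl
    set M := Y / (2 * π * N) with hM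
    have hM0 : 0 < M := by positivity
    have hMY : M ≤ Y / N := by
      rw [hM]
      refine div_le_div_of_nonneg_left hY0.le hN0 ?_
      nlinarith [pi_gt_three]
    have hMκ : M ^ κ ≤ (T / N) ^ κ :=
      rpow_le_rpow hM0.le (hMY.trans (by gcongr)) hκ
    have hMκ0 : 0 < M ^ κ := rpow_pos_of_pos hM0 κ
    have t1 : N ^ 4 / Y ^ 2 * (M ^ κ * (M ^ 4 / Y + M ^ 2)) ≤ 2 * N ^ 2 * (T / N) ^ κ := by
      calc N ^ 4 / Y ^ 2 * (M ^ κ * (M ^ 4 / Y + M ^ 2))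
          ≤ N ^ 4 / Y ^ 2 * ((T / N) ^ κ * ((Y / N) ^ 4 / Y + (Y / N) ^ 2)) := by gcongr
        _ = (T / N) ^ κ * (Y + N ^ 2) := by field_simp
        _ ≤ (T / N) ^ κ * (N ^ 2 + N ^ 2) := by
            have : 0 ≤ (T / N) ^ κ := by positivity
            gcongr
            exact hYT.trans hTN
        _ = _ := by ring
    have t2 : Y * (N / Y ^ 2 + 1 / N) ^ 4 ≤ 16 * (N ^ 4 * (1 / Y)) := by
      have e1 : N / Y ^ 2 ≤ N / Y := by
        refine div_le_div_of_nonneg_left hN0.le hY0 ?_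
        nlinarith
      have e2 : 1 / N ≤ N / Y := by
        rw [div_le_div_iff₀ hN0 hY0]
        nlinarith
      have e3 : N / Y ^ 2 + 1 / N ≤ 2 * (N / Y) := by linarith
      have e4 : (N / Y) ^ 4 * Y ≤ N ^ 4 * (1 / Y) := by
        have : (N / Y) ^ 4 * Y = N ^ 4 * (1 / Y ^ 3) := by field_simp
        rw [this]
        gcongr
        exact le_self_pow₀ hY1 (by norm_num)
      calc Y * (N / Y ^ 2 + 1 / N) ^ 4 ≤ Y * (2 * (N / Y)) ^ 4 := by gcongr
        _ = 16 * ((N / Y) ^ 4 * Y) := by ring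
        _ ≤ _ := by gcongr
    have hP : 0 ≤ N ^ 2 * (T / N) ^ κ * Y := by positivity
    calc _ ≤ (1 - α) * 2 ^ (1 - α) * Y * (C * (N ^ 4 / Y ^ 2 * (M ^ κ * (M ^ 4 / Y + M ^ 2)) +
          (N / Y ^ 2 + 1 / N) ^ 4)) := h1.trans (by gcongr)
      _ = (1 - α) * 2 ^ (1 - α) * C * (Y * (N ^ 4 / Y ^ 2 * (M ^ κ * (M ^ 4 / Y + M ^ 2))) +
          Y * (N / Y ^ 2 + 1 / N) ^ 4) := by ring
      _ ≤ (1 - α) * 2 ^ (1 - α) * C * (Y * (2 * N ^ 2 * (T / N) ^ κ) + 16 * (N ^ 4 * (1 / Y))) := by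
          gcongr
      _ ≤ (1 - α) * 2 ^ (1 - α) * C * (16 * (N ^ 2 * (T / N) ^ κ * Y) + 16 * (N ^ 4 * (1 / Y))) := by
          refine mul_le_mul_of_nonneg_left ?_ (by positivity)
          linarith
      _ = _ := by rw [hD]; ring
  have hfirst : ∫ y in (0 : ℝ)..1, g y ≤ (b₀ + 1) ^ 4 * N ^ 4 := by
    calc ∫ y in (0 : ℝ)..1, g y ≤ ∫ y in (0 : ℝ)..1, ((b₀ + 1) * N) ^ 4 := by
          refine intervalIntegral.integral_mono_on zero_le_one (hgc.intervalIntegrable _ _)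
            (by simp) fun y _ => ?_
          exact pow_le_pow_left₀ (norm_nonneg _) (norm_smoothSum_le hω1 α hb₀ hN y) 4
      _ = _ := by rw [intervalIntegral.integral_const, smul_eq_mul]; ring
  have hrest : ∫ y in (1 : ℝ)..T, g y ≤ D * R * (N ^ 2 * T * (T / N) ^ κ + N ^ 4) := by
    obtain ⟨g1, g2⟩ := geom_block_sum_le hρ hn1
    have hTκ : 0 ≤ (T / N) ^ κ := by positivity
    calc ∫ y in (1 : ℝ)..T, g y ≤ ∫ y in (1 : ℝ)..ρ ^ (n + 1), g y :=
          intervalIntegral.integral_mono_interval le_rfl hT hn2.le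
            (Filter.Eventually.of_forall hg0) (hgc.intervalIntegrable _ _)
      _ = ∑ j ∈ Finset.range (n + 1), ∫ y in ρ ^ j..ρ ^ (j + 1), g y := by
          rw [intervalIntegral.sum_integral_adjacent_intervals
            (fun j _ => hgc.intervalIntegrable _ _), pow_zero]
      _ ≤ ∑ j ∈ Finset.range (n + 1), D * (N ^ 2 * (T / N) ^ κ * ρ ^ j + N ^ 4 * (1 / ρ ^ j)) :=
          Finset.sum_le_sum hstep
      _ = D * (N ^ 2 * (T / N) ^ κ * ∑ j ∈ Finset.range (n + 1), ρ ^ j +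
          N ^ 4 * ∑ j ∈ Finset.range (n + 1), 1 / ρ ^ j) := by
          rw [← Finset.mul_sum, Finset.sum_add_distrib, ← Finset.mul_sum, ← Finset.mul_sum]
      _ ≤ D * (N ^ 2 * (T / N) ^ κ * (R * T) + N ^ 4 * R) := by gcongr
      _ = _ := by ring
  rw [← intervalIntegral.integral_add_adjacent_intervals (hgc.intervalIntegrable 0 1)
    (hgc.intervalIntegrable 1 T)]
  have hx : 0 ≤ N ^ 2 * T * (T / N) ^ κ := by positivity
  have hb4 : 0 ≤ (b₀ + 1) ^ 4 := by positivity
  nlinarith [mul_nonneg hb4 hx]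

lemma integral_one_sub_mul_cos_nonneg (θ : ℝ) :
    0 ≤ ∫ s in (0 : ℝ)..1, (1 - s) * cos (s * θ) := by
  by_cases hθ : θ = 0
  · refine intervalIntegral.integral_nonneg zero_le_one fun s hs => ?_
    rw [hθ, mul_zero, cos_zero, mul_one]
    linarith [hs.2]
  · have h : ∀ s : ℝ, HasDerivAt (fun s => (1 - s) * (sin (s * θ) / θ) - cos (s * θ) / θ ^ 2)
        ((1 - s) * cos (s * θ)) s := by
      intro s
      have h1 : HasDerivAt (fun s : ℝ => s * θ) θ s := by
        simpa using (hasDerivAt_id s).mul_const θ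
      have h2 := ((((hasDerivAt_id s).const_sub 1).mul (h1.sin.div_const θ)).sub
        (h1.cos.div_const (θ ^ 2)))
      refine h2.congr_deriv ?_
      simp only [id]
      field_simp
      ring
    rw [intervalIntegral.integral_eq_sub_of_hasDerivAt (fun s _ => h s)
      (Continuous.intervalIntegrable (by fun_prop) _ _)]
    have h3 : 0 ≤ (1 - cos θ) / θ ^ 2 := div_nonneg (by linarith [cos_le_one θ]) (sq_nonneg θ)
    have e : (1 - 1) * (sin (1 * θ) / θ) - cos (1 * θ) / θ ^ 2 -
        ((1 - 0) * (sin (0 * θ) / θ) - cos (0 * θ) / θ ^ 2) = (1 - cos θ) / θ ^ 2 := by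
      simp; ring
    rw [e]
    exact h3

lemma quarter_le_integral_one_sub_mul_cos {θ : ℝ} (hθ : |θ| ≤ 1) :
    1 / 4 ≤ ∫ s in (0 : ℝ)..1, (1 - s) * cos (s * θ) := by
  have h : ∫ s in (0 : ℝ)..1, (1 - s) * (1 / 2) ≤ ∫ s in (0 : ℝ)..1, (1 - s) * cos (s * θ) := by
    refine intervalIntegral.integral_mono_on zero_le_one
      (Continuous.intervalIntegrable (by fun_prop) _ _)
      (Continuous.intervalIntegrable (by fun_prop) _ _) fun s hs => ?_
    refine mul_le_mul_of_nonneg_left ?_ (by linarith [hs.2])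
    have h1 := one_sub_sq_div_two_le_cos (x := s * θ)
    have h2 : (s * θ) ^ 2 ≤ 1 := by
      rw [mul_pow]
      exact mul_le_one₀ (by nlinarith [hs.1, hs.2]) (sq_nonneg θ)
        ((sq_le_one_iff_abs_le_one θ).2 hθ)
    linarith
  refine le_trans (le_of_eq ?_) h
  rw [intervalIntegral.integral_mul_const, intervalIntegral.integral_sub (by simp) (by simp)]
  simp
  norm_num

/-- The counting function is dominated by the fourth moment of the smoothed sum. -/
lemma quadCount_le_integral {ω : ℝ → ℝ} (hω0 : ∀ x, 0 ≤ ω x) {a b b₀ : ℝ}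
    (hω1 : ∀ x ∈ Set.Icc a b, ω x = 1) (hb : 0 < b) (hbb : b ≤ b₀) (α : ℝ) {N T : ℝ} (hN : 0 < N)
    (hT : 0 < T) :
    (quadCount α a b N (1 / T) : ℝ) ≤
      4 * (1 / T) * ∫ y in (0 : ℝ)..T, ‖smoothSum ω α b₀ N y‖ ^ 4 := by
  set A := Finset.range (⌊b₀ * N⌋₊ + 1) with hA
  set A' := Finset.Icc ⌈a * N⌉₊ ⌊b * N⌋₊ with hA'
  set t : ℕ → ℝ := fun n => ((n : ℝ) / N) ^ α with ht
  set W : ℕ × ℕ × ℕ × ℕ → ℝ := fun q =>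
    ω (q.1 / N) * ω (q.2.1 / N) * (ω (q.2.2.1 / N) * ω (q.2.2.2 / N)) with hW
  have hW0 : ∀ q, 0 ≤ W q := fun q =>
    mul_nonneg (mul_nonneg (hω0 _) (hω0 _)) (mul_nonneg (hω0 _) (hω0 _))
  have hS4 : ∀ y, ‖smoothSum ω α b₀ N y‖ ^ 4 = ∑ q ∈ quads A, W q * cos (y * quadGap t q) := by
    intro y
    have h := norm_sum_mul_osc_pow_four A (fun n => (ω (n / N) : ℂ)) t y
    have h' := congrArg Complex.re h
    rw [Complex.ofReal_re, Complex.re_sum] at h'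
    rw [smoothSum, h']
    refine Finset.sum_congr rfl fun q _ => ?_
    simp only [Complex.conj_ofReal, ← Complex.ofReal_mul, Complex.re_ofReal_mul, osc,
      Complex.exp_ofReal_mul_I_re, hW]
  have hSc := continuous_smoothSum ω α b₀ N
  have hone : ∀ n ∈ A', n ∈ A ∧ ω ((n : ℝ) / N) = 1 := by
    intro n hn
    obtain ⟨h1, h2⟩ := Finset.mem_Icc.1 hn
    have h1' : a * N ≤ n := Nat.ceil_le.1 h1
    have h2' : (n : ℝ) ≤ b * N := (Nat.le_floor_iff (by positivity)).1 h2
    refine ⟨Finset.mem_range.2 (Nat.lt_succ_of_le (Nat.le_floor (h2'.trans (by gcongr)))),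
      hω1 _ ⟨?_, ?_⟩⟩
    · rwa [le_div_iff₀ hN]
    · rwa [div_le_iff₀ hN]
  have hsub : (quads A').filter (fun q => |quadGap t q| < 1 / T) ⊆ quads A := by
    intro q hq
    obtain ⟨h1, h2, h3, h4⟩ := mem_quads.1 (Finset.mem_filter.1 hq).1
    exact mem_quads.2 ⟨(hone _ h1).1, (hone _ h2).1, (hone _ h3).1, (hone _ h4).1⟩
  have hfejer : ∫ s in (0 : ℝ)..1, (1 - s) * ‖smoothSum ω α b₀ N (s * T)‖ ^ 4 =
      ∑ q ∈ quads A, W q * ∫ s in (0 : ℝ)..1, (1 - s) * cos (s * (T * quadGap t q)) := by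
    simp_rw [← intervalIntegral.integral_const_mul]
    rw [← intervalIntegral.integral_finsetSum
      (fun q _ => Continuous.intervalIntegrable (by fun_prop) _ _)]
    refine intervalIntegral.integral_congr fun s _ => ?_
    rw [hS4, Finset.mul_sum]
    refine Finset.sum_congr rfl fun q _ => ?_
    rw [mul_assoc s T]
    ring
  have hlow : (1 / 4) * (quadCount α a b N (1 / T) : ℝ) ≤
      ∫ s in (0 : ℝ)..1, (1 - s) * ‖smoothSum ω α b₀ N (s * T)‖ ^ 4 := by
    rw [hfejer]
    refine le_trans ?_ (Finset.sum_le_sum_of_subset_of_nonneg hsub fun q _ _ =>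
      mul_nonneg (hW0 q) (integral_one_sub_mul_cos_nonneg _))
    rw [quadCount, mul_comm, ← nsmul_eq_mul, ← Finset.sum_const]
    refine Finset.sum_le_sum fun q hq => ?_
    obtain ⟨hq1, hq2⟩ := Finset.mem_filter.1 hq
    obtain ⟨h1, h2, h3, h4⟩ := mem_quads.1 hq1
    have hWq : W q = 1 := by
      simp only [hW, (hone _ h1).2, (hone _ h2).2, (hone _ h3).2, (hone _ h4).2, mul_one]
    rw [hWq, one_mul]
    refine quarter_le_integral_one_sub_mul_cos ?_
    rw [abs_mul, abs_of_pos hT]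
    exact ((lt_div_iff₀' hT).1 hq2).le
  have hup : ∫ s in (0 : ℝ)..1, (1 - s) * ‖smoothSum ω α b₀ N (s * T)‖ ^ 4 ≤
      (1 / T) * ∫ y in (0 : ℝ)..T, ‖smoothSum ω α b₀ N y‖ ^ 4 := by
    have h := intervalIntegral.integral_comp_mul_right (a := 0) (b := 1)
      (fun y => ‖smoothSum ω α b₀ N y‖ ^ 4) hT.ne'
    rw [zero_mul, one_mul, smul_eq_mul, ← one_div] at h
    rw [← h]
    refine intervalIntegral.integral_mono_on zero_le_one
      (Continuous.intervalIntegrable (by fun_prop) _ _)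
      (Continuous.intervalIntegrable (by fun_prop) _ _) fun s hs => ?_
    exact mul_le_of_le_one_left (by positivity) (by linarith [hs.1])
  linarith

lemma quadCount_mono (α a b N : ℝ) {δ δ' : ℝ} (h : δ ≤ δ') :
    quadCount α a b N δ ≤ quadCount α a b N δ' :=
  Finset.card_le_card (Finset.monotone_filter_right _ fun _ _ hq => lt_of_lt_of_le hq h)

lemma quadCount_le_pow_four (α : ℝ) {a b N : ℝ} (δ : ℝ) (ha : 0 < a) (hb : 0 < b) (hN : 0 < N) :
    (quadCount α a b N δ : ℝ) ≤ (b * N) ^ 4 := by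
  have h1 : quadCount α a b N δ ≤ (Finset.Icc ⌈a * N⌉₊ ⌊b * N⌋₊).card ^ 4 :=
    (Finset.card_filter_le _ _).trans (card_quads _).le
  have h2 : (Finset.Icc ⌈a * N⌉₊ ⌊b * N⌋₊).card ≤ ⌊b * N⌋₊ := by
    have := Nat.ceil_pos.2 (mul_pos ha hN)
    rw [Nat.card_Icc]
    omega
  calc (quadCount α a b N δ : ℝ) ≤ ((⌊b * N⌋₊ ^ 4 : ℕ) : ℝ) := by
        exact_mod_cast h1.trans (Nat.pow_le_pow_left h2 4)
    _ ≤ (b * N) ^ 4 := by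
        push_cast
        gcongr
        exact Nat.floor_le (by positivity)

lemma countBound_two (α : ℝ) : CountBound α 2 := by
  intro a b ha hab
  have hb : 0 < b := ha.trans hab
  refine ⟨b ^ 4, by positivity, fun N δ hN hδ => ?_⟩
  refine (quadCount_le_pow_four α δ ha hb hN).trans ?_
  rw [rpow_two]
  have : 0 ≤ b ^ 4 * N ^ 2 * (N ^ 4 * δ) := by positivity
  nlinarith

/-- The counting bound for the dual exponent improves the loss from `κ` to `κ / (1 + κ)`. -/
lemma CountBound.of_dual {α κ : ℝ} (hα0 : α ≠ 0) (hα1 : α < 1) (hκ : 0 ≤ κ)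
    (hH : CountBound (α / (α - 1)) κ) : CountBound α (κ / (1 + κ)) := by
  intro a b ha hab
  have hb : 0 < b := ha.trans hab
  let φ : ContDiffBump ((a + b) / 2) := ⟨(b - a) / 2, b / 2, by linarith, by linarith⟩
  have hφ3 : ContDiff ℝ 3 φ := φ.contDiff
  have hφabs : ∀ x, |φ x| ≤ 1 := fun x => by
    rw [abs_of_nonneg φ.nonneg]; exact φ.le_one
  have hφ1 : ∀ x ∈ Set.Icc a b, φ x = 1 := fun x hx => by
    refine φ.one_of_mem_closedBall ?_
    rw [Real.closedBall_eq_Icc]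
    exact ⟨by change _ - (b - a) / 2 ≤ x; linarith [hx.1], by
      change x ≤ _ + (b - a) / 2; linarith [hx.2]⟩
  have hφl : ∀ x ≤ a / 2, φ x = 0 := fun x hx => by
    refine φ.zero_of_le_dist ?_
    rw [Real.dist_eq, abs_sub_comm]
    change b / 2 ≤ _
    exact le_trans (by linarith) (le_abs_self _)
  have hφr : ∀ x ≥ a / 2 + b, φ x = 0 := fun x hx => by
    refine φ.zero_of_le_dist ?_
    rw [Real.dist_eq]
    change b / 2 ≤ _
    exact le_trans (by linarith) (le_abs_self _)
  obtain ⟨C, hC, hbd⟩ := exists_integral_smoothSum_pow_four_le hφ3 hφabs hα0 hα1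
    (half_pos ha) (by linarith : a / 2 < a / 2 + b) hφl hφr hκ hH
  set η := κ / (1 + κ) with hη
  have hη0 : 0 ≤ η := by positivity
  have hη1 : η < 1 := by rw [hη, div_lt_one (by linarith)]; linarith
  have hηκ : (1 - η) * κ = η := by
    have : 1 + κ ≠ 0 := by linarith
    rw [hη]; field_simp; ring
  refine ⟨b ^ 4 + 8 * C, by positivity, fun N δ hN hδ => ?_⟩
  have htriv := quadCount_le_pow_four α δ ha hb hN
  have hNη : 0 < N ^ η := rpow_pos_of_pos hN η
  have hC' : 0 ≤ 8 * C * N ^ η * (N ^ 4 * δ + N ^ 2) := by positivity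
  have hb' : 0 ≤ b ^ 4 * N ^ η * (N ^ 4 * δ + N ^ 2) := by positivity
  rw [add_mul, add_mul]
  rcases lt_or_ge N 1 with hN1 | hN1
  · have h1 : N ^ 2 ≤ N ^ η := by
      rw [← rpow_two]; exact rpow_le_rpow_of_exponent_ge hN hN1.le (by linarith)
    have h2 : (b * N) ^ 4 ≤ b ^ 4 * N ^ η * (N ^ 4 * δ + N ^ 2) := by
      calc (b * N) ^ 4 = b ^ 4 * N ^ 2 * N ^ 2 := by ring
        _ ≤ b ^ 4 * N ^ η * (N ^ 4 * δ + N ^ 2) := by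
            have : 0 ≤ N ^ 4 * δ := by positivity
            gcongr
            linarith
    linarith
  have hNη1 : 1 ≤ N ^ η := one_le_rpow hN1 hη0
  rcases le_or_gt 1 δ with hδ1 | hδ1
  · have h2 : (b * N) ^ 4 ≤ b ^ 4 * N ^ η * (N ^ 4 * δ + N ^ 2) := by
      calc (b * N) ^ 4 = b ^ 4 * 1 * (N ^ 4 * 1 + 0) := by ring
        _ ≤ b ^ 4 * N ^ η * (N ^ 4 * δ + N ^ 2) := by gcongr; positivity
    linarith
  set δ₁ := max δ (N ^ (η - 2)) with hδ₁
  have hδ₁0 : 0 < δ₁ := lt_max_of_lt_left hδ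
  have hδ₁1 : δ₁ ≤ 1 := max_le hδ1.le (rpow_le_one_of_one_le_of_nonpos hN1 (by linarith))
  have hTη : 1 / δ₁ ≤ N ^ (2 - η) := by
    rw [div_le_iff₀ hδ₁0]
    calc (1 : ℝ) = N ^ (2 - η) * N ^ (η - 2) := by rw [← rpow_add hN]; simp
      _ ≤ _ := by gcongr; exact le_max_right _ _
  have hTN : 1 / δ₁ ≤ N ^ 2 := by
    refine hTη.trans ?_
    rw [← rpow_two]
    exact rpow_le_rpow_of_exponent_le hN1 (by linarith)
  have hT1 : 1 ≤ 1 / δ₁ := by rwa [le_div_iff₀ hδ₁0, one_mul]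
  have h1 := quadCount_le_integral (fun x => φ.nonneg) hφ1 hb (by linarith : b ≤ a / 2 + b) α hN
    (one_div_pos.2 hδ₁0)
  rw [one_div_one_div] at h1
  have h2 := hbd N (1 / δ₁) hN1 hT1 hTN
  have h3 : (quadCount α a b N δ : ℝ) ≤ quadCount α a b N δ₁ := by
    exact_mod_cast quadCount_mono α a b N (le_max_left _ _)
  have hpow : (1 / δ₁ / N) ^ κ ≤ N ^ η := by
    have e : N ^ (2 - η) / N = N ^ (1 - η) := by
      rw [← rpow_sub_one hN.ne']; ring_nf
    calc (1 / δ₁ / N) ^ κ ≤ (N ^ (1 - η)) ^ κ := by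
          rw [← e]
          exact rpow_le_rpow (by positivity) (by gcongr) hκ
      _ = N ^ η := by rw [← rpow_mul hN.le, hηκ]
  have hδsum : N ^ 4 * δ₁ ≤ N ^ η * (N ^ 4 * δ + N ^ 2) := by
    have e1 : δ₁ ≤ δ + N ^ (η - 2) := max_le (by linarith [rpow_pos_of_pos hN (η - 2)])
      (by linarith)
    have e2 : N ^ 4 * N ^ (η - 2) = N ^ η * N ^ 2 := by
      rw [← rpow_natCast N 4, ← rpow_natCast N 2, ← rpow_add hN, ← rpow_add hN]
      push_cast
      ring_nf
    have e3 : N ^ 4 * δ ≤ N ^ η * (N ^ 4 * δ) := le_mul_of_one_le_left (by positivity) hNη1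
    calc N ^ 4 * δ₁ ≤ N ^ 4 * (δ + N ^ (η - 2)) := by gcongr
      _ = N ^ 4 * δ + N ^ η * N ^ 2 := by rw [mul_add, e2]
      _ ≤ _ := by rw [mul_add]; linarith
  have hfin : (quadCount α a b N δ : ℝ) ≤ 8 * C * N ^ η * (N ^ 4 * δ + N ^ 2) := by
    calc (quadCount α a b N δ : ℝ) ≤ 4 * δ₁ * ∫ y in (0 : ℝ)..1 / δ₁,
          ‖smoothSum φ α (a / 2 + b) N y‖ ^ 4 := h3.trans h1
      _ ≤ 4 * δ₁ * (C * (N ^ 4 + N ^ 2 * (1 / δ₁) * (1 / δ₁ / N) ^ κ)) := by gcongr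
      _ = 4 * C * (N ^ 4 * δ₁ + N ^ 2 * (1 / δ₁ / N) ^ κ) := by field_simp
      _ ≤ 4 * C * (N ^ η * (N ^ 4 * δ + N ^ 2) + N ^ 2 * N ^ η) := by gcongr
      _ ≤ 4 * C * (N ^ η * (N ^ 4 * δ + N ^ 2) + N ^ η * (N ^ 4 * δ + N ^ 2)) := by
          have : 0 ≤ N ^ η * (N ^ 4 * δ) := by positivity
          refine mul_le_mul_of_nonneg_left ?_ (by positivity)
          nlinarith
      _ = _ := by ring
  linarith

lemma countBound_two_div {α : ℝ} (hα0 : α ≠ 0) (hα1 : α < 1) (n : ℕ) :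
    CountBound α (2 / (1 + 2 * n)) := by
  induction n generalizing α with
  | zero => simpa using countBound_two α
  | succ n ih =>
    have hα2 : α - 1 < 0 := by linarith
    have h := CountBound.of_dual hα0 hα1 (by positivity)
      (ih (div_ne_zero hα0 hα2.ne) (by rw [div_lt_one_of_neg hα2]; linarith))
    have e : (2 : ℝ) / (1 + 2 * ((n + 1 : ℕ) : ℝ)) =
        2 / (1 + 2 * (n : ℝ)) / (1 + 2 / (1 + 2 * (n : ℝ))) := by
      push_cast
      field_simp
      ring
    rw [e]
    exact h

theorem robert_sargos_count (k : ℕ) (hk : 2 ≤ k) (ε : ℝ) (hε : 0 < ε) :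
    ∃ C : ℝ, 0 < C ∧ ∀ (δ : ℝ), 0 < δ → ∀ N : ℕ, 1 ≤ N →
      ((((Finset.Ioc N (2 * N)) ×ˢ (Finset.Ioc N (2 * N)) ×ˢ
          (Finset.Ioc N (2 * N)) ×ˢ (Finset.Ioc N (2 * N))).filter
        (fun q : ℕ × ℕ × ℕ × ℕ =>
          |(q.1 : ℝ) ^ ((1:ℝ)/k) + (q.2.1 : ℝ) ^ ((1:ℝ)/k)
            - (q.2.2.1 : ℝ) ^ ((1:ℝ)/k) - (q.2.2.2 : ℝ) ^ ((1:ℝ)/k)|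
            < δ * (N : ℝ) ^ ((1:ℝ)/k))).card : ℝ)
        ≤ C * (N : ℝ) ^ ε * ((N : ℝ) ^ 4 * δ + (N : ℝ) ^ 2) := by
  have hk' : (2 : ℝ) ≤ k := by exact_mod_cast hk
  have hα0 : (1 : ℝ) / k ≠ 0 := by positivity
  have hα1 : (1 : ℝ) / k < 1 := by rw [div_lt_one (by linarith)]; linarith
  obtain ⟨n, hn⟩ := exists_nat_gt (2 / ε)
  have hnε : 2 / (1 + 2 * (n : ℝ)) ≤ ε := by
    rw [div_le_iff₀ (by positivity)]
    rw [div_lt_iff₀ hε] at hn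
    nlinarith [Nat.cast_nonneg (α := ℝ) n]
  obtain ⟨C, hC, hbd⟩ := countBound_two_div hα0 hα1 n 1 2 one_pos one_lt_two
  refine ⟨C, hC, fun δ hδ N hN => ?_⟩
  have hN1 : (1 : ℝ) ≤ N := by exact_mod_cast hN
  have hN0 : (0 : ℝ) < N := by linarith
  have hle : (N : ℝ) ^ (2 / (1 + 2 * (n : ℝ))) ≤ (N : ℝ) ^ ε :=
    rpow_le_rpow_of_exponent_le hN1 hnε
  refine le_trans ?_ ((hbd N δ hN0 hδ).trans (by gcongr))
  rw [quadCount]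
  refine Nat.cast_le.2 (Finset.card_le_card fun q hq => ?_)
  simp only [Finset.mem_filter, Finset.mem_product, Finset.mem_Ioc] at hq
  have hmem : ∀ m : ℕ, N < m ∧ m ≤ 2 * N →
      m ∈ Finset.Icc ⌈(1 : ℝ) * N⌉₊ ⌊(2 : ℝ) * N⌋₊ := by
    intro m hm
    refine Finset.mem_Icc.2 ⟨Nat.ceil_le.2 ?_, Nat.le_floor ?_⟩
    · rw [one_mul]; exact_mod_cast hm.1.le
    · exact_mod_cast hm.2
  obtain ⟨⟨h1, h2, h3, h4⟩, hgap⟩ := hq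
  refine Finset.mem_filter.2 ⟨mem_quads.2 ⟨hmem _ h1, hmem _ h2, hmem _ h3, hmem _ h4⟩, ?_⟩
  have hNα : 0 < (N : ℝ) ^ ((1 : ℝ) / k) := rpow_pos_of_pos hN0 _
  have e : quadGap (fun m : ℕ => ((m : ℝ) / N) ^ ((1 : ℝ) / k)) q =
      ((q.1 : ℝ) ^ ((1:ℝ)/k) + (q.2.1 : ℝ) ^ ((1:ℝ)/k)
        - (q.2.2.1 : ℝ) ^ ((1:ℝ)/k) - (q.2.2.2 : ℝ) ^ ((1:ℝ)/k)) / (N : ℝ) ^ ((1 : ℝ) / k) := by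
    simp only [quadGap]
    rw [div_rpow (by positivity) hN0.le, div_rpow (by positivity) hN0.le,
      div_rpow (by positivity) hN0.le, div_rpow (by positivity) hN0.le]
    ring
  rw [e, abs_div, abs_of_pos hNα, div_lt_iff₀ hNα]
  exact hgap
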